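/- arXiv:2011.08646 — 4 statements merged into one kernel-verified Lean document; each statement's English description precedes it below -/
import Mathlib

section
/- Let 0 → A →f→ B →g→ C → 0 be an almost split sequence in C, let b : P → C be a projective cover with kernel i : Ω(C) → P, let b' : P → B be a lifting of b through g, and let h : Ω(C) → A⊕P be the kernel of [f b'] : A⊕P → B. Then the sequence 0 → (0 → A) → (Ω(C) →h→ A⊕P) → (Ω(C) →i→ P) → 0 in S(C), with morphisms (0, [1 0]^t) and (1, [0 1]), is an almost split sequence in S(C); i.e. it is the almost split sequence in S(C) starting at (0 → A). -/
open CategoryTheory CategoryTheory.Limits Opposite ZeroObject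

universe v u

/-- A short exact sequence `0 → X → Y → Z → 0` in an abelian category. -/
structure IsSES {C : Type u} [Category.{v} C] [Abelian C] {X Y Z : C}
    (f : X ⟶ Y) (g : Y ⟶ Z) : Prop where
  mono : Mono f
  epi : Epi g
  w : f ≫ g = 0
  ex : (ShortComplex.mk f g w).Exact

/-- `u` is not a section (a split monomorphism). -/
def IsSection {C : Type u} [Category.{v} C] {X Y : C} (u : X ⟶ Y) : Prop :=
  ∃ r : Y ⟶ X, u ≫ r = 𝟙 X

/-- `v` is not a retraction (a split epimorphism). -/
def IsRetractionHom {C : Type u} [Category.{v} C] {Y Z : C} (v : Y ⟶ Z) : Prop :=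
  ∃ s : Z ⟶ Y, s ≫ v = 𝟙 Z

/-- `u : X → Y` is minimal left almost split in the subcategory of `C` determined by the
predicate `P`:  `u` is not a section, every non-section `X → W` with `W` in the
subcategory factors through `u`, and every `h` with `h ∘ u = u` is an automorphism. -/
def MinLAS {C : Type u} [Category.{v} C] (P : C → Prop) {X Y : C} (u : X ⟶ Y) : Prop :=
  (¬ IsSection u) ∧
  (∀ W : C, P W → ∀ f : X ⟶ W, ¬ IsSection f → ∃ t : Y ⟶ W, u ≫ t = f) ∧
  (∀ h : Y ⟶ Y, u ≫ h = u → IsIso h)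

/-- `v : Y → Z` is minimal right almost split in the subcategory of `C` determined by
`P`. -/
def MinRAS {C : Type u} [Category.{v} C] (P : C → Prop) {Y Z : C} (v : Y ⟶ Z) : Prop :=
  (¬ IsRetractionHom v) ∧
  (∀ W : C, P W → ∀ f : W ⟶ Z, ¬ IsRetractionHom f → ∃ t : W ⟶ Y, t ≫ v = f) ∧
  (∀ h : Y ⟶ Y, h ≫ v = v → IsIso h)

/-- `0 → X → Y → Z → 0` is an almost split sequence in the extension-closed subcategory of
the abelian category `C` determined by the predicate `P`. -/
def IsASSGen {C : Type u} [Category.{v} C] [Abelian C] (P : C → Prop) {X Y Z : C}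
    (u : X ⟶ Y) (v : Y ⟶ Z) : Prop :=
  P X ∧ P Y ∧ P Z ∧ IsSES u v ∧ MinLAS P u ∧ MinRAS P v

/-- A short exact sequence in the morphism category `H(C)` of an abelian category `C`,
i.e. a componentwise short exact sequence. -/
def ArrowSES {C : Type u} [Category.{v} C] [Abelian C] {X Y Z : Arrow C}
    (u : X ⟶ Y) (v : Y ⟶ Z) : Prop :=
  IsSES u.left v.left ∧ IsSES u.right v.right

/-- `0 → X → Y → Z → 0` is an almost split sequence in the (extension-closed) subcategory
of the morphism category `H(C)` determined by the predicate `P`. -/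
def IsASSArrow {C : Type u} [Category.{v} C] [Abelian C] (P : Arrow C → Prop)
    {X Y Z : Arrow C} (u : X ⟶ Y) (v : Y ⟶ Z) : Prop :=
  P X ∧ P Y ∧ P Z ∧ ArrowSES u v ∧ MinLAS P u ∧ MinRAS P v

/-- A Krull–Schmidt category: every object is a finite direct sum of objects with local
endomorphism rings. -/
def IsKrullSchmidt (C : Type u) [Category.{v} C] [Abelian C] : Prop :=
  letI : HasFiniteBiproducts C := Abelian.hasFiniteBiproducts (C := C)
  ∀ X : C, ∃ (n : ℕ) (f : Fin n → C),
    (∀ i, IsLocalRing (End (f i))) ∧ Nonempty (X ≅ ⨁ f)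

/-- Lifting through the kernel in a short exact sequence. -/
lemma ses_lift {C : Type u} [Category.{v} C] [Abelian C] {X Y Z : C} {f : X ⟶ Y} {g : Y ⟶ Z}
    (hs : IsSES f g) {W : C} (x : W ⟶ Y) (hx : x ≫ g = 0) : ∃ y : W ⟶ X, y ≫ f = x := by
  haveI : Mono (ShortComplex.mk f g hs.w).f := hs.mono
  exact ⟨hs.ex.lift x hx, hs.ex.lift_f x hx⟩

/-- Descending through the cokernel in a short exact sequence. -/
lemma ses_desc {C : Type u} [Category.{v} C] [Abelian C] {X Y Z : C} {f : X ⟶ Y} {g : Y ⟶ Z}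
    (hs : IsSES f g) {W : C} (x : Y ⟶ W) (hx : f ≫ x = 0) : ∃ y : Z ⟶ W, g ≫ y = x := by
  haveI : Epi (ShortComplex.mk f g hs.w).g := hs.epi
  exact ⟨hs.ex.desc x hx, hs.ex.g_desc x hx⟩

lemma ses_of_kernel {C : Type u} [Category.{v} C] [Abelian C] {X Y Z : C} {f : X ⟶ Y}
    {g : Y ⟶ Z} (w : f ≫ g = 0) (hk : IsLimit (KernelFork.ofι f w)) (hg : Epi g) :
    IsSES f g where
  mono := mono_of_isLimit_fork hk
  epi := hg
  w := w
  ex := ShortComplex.exact_of_f_is_kernel _ hk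

lemma ses_of_mono {C : Type u} [Category.{v} C] [Abelian C] {X Y : C} (f : X ⟶ Y) [Mono f] :
    IsSES f (cokernel.π f) where
  mono := inferInstance
  epi := inferInstance
  w := cokernel.condition f
  ex := ShortComplex.exact_of_g_is_cokernel _ (cokernelIsCokernel f)

/-- Middle case of the five lemma. -/
lemma ses_iso_mid {C : Type u} [Category.{v} C] [Abelian C] {X Y Z : C} {f : X ⟶ Y} {g : Y ⟶ Z}
    (hs : IsSES f g) (a : X ⟶ X) (e : Y ⟶ Y) (c : Z ⟶ Z) (h1 : a ≫ f = f ≫ e)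
    (h2 : e ≫ g = g ≫ c) (ha : IsIso a) (hc : IsIso c) : IsIso e := by
  let S := ShortComplex.mk f g hs.w
  have hS : S.ShortExact := { exact := hs.ex, mono_f := hs.mono, epi_g := hs.epi }
  let φ : S ⟶ S := { τ₁ := a, τ₂ := e, τ₃ := c, comm₁₂ := h1, comm₂₃ := h2 }
  haveI : IsIso φ.τ₁ := ha
  haveI : IsIso φ.τ₃ := hc
  exact ShortComplex.isIso₂_of_shortExact_of_isIso₁₃ φ hS hS

lemma ses_iso_left {C : Type u} [Category.{v} C] [Abelian C] {X Y Z : C} {f : X ⟶ Y} {g : Y ⟶ Z}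
    (hs : IsSES f g) (a : X ⟶ X) (e : Y ⟶ Y) (c : Z ⟶ Z) (h1 : a ≫ f = f ≫ e)
    (h2 : e ≫ g = g ≫ c) (he : IsIso e) (hc : IsIso c) : IsIso a := by
  haveI := hs.mono
  have h3 : inv e ≫ g = g ≫ inv c := by
    rw [IsIso.inv_comp_eq, ← Category.assoc, h2, Category.assoc, IsIso.hom_inv_id,
      Category.comp_id]
  obtain ⟨y, hy⟩ := ses_lift hs (f ≫ inv e) (by
    rw [Category.assoc, h3, ← Category.assoc, hs.w, zero_comp])
  refine ⟨y, ?_, ?_⟩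
  · rw [← cancel_mono f, Category.assoc, hy, ← Category.assoc, h1]; simp
  · rw [← cancel_mono f, Category.assoc, h1, ← Category.assoc, hy]; simp

lemma ses_iso_right {C : Type u} [Category.{v} C] [Abelian C] {X Y Z : C} {f : X ⟶ Y} {g : Y ⟶ Z}
    (hs : IsSES f g) (a : X ⟶ X) (e : Y ⟶ Y) (c : Z ⟶ Z) (h1 : a ≫ f = f ≫ e)
    (h2 : e ≫ g = g ≫ c) (ha : IsIso a) (he : IsIso e) : IsIso c := by
  haveI := hs.epi
  have h3 : f ≫ inv e = inv a ≫ f := by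
    rw [IsIso.eq_inv_comp, ← Category.assoc, h1, Category.assoc, IsIso.hom_inv_id,
      Category.comp_id]
  obtain ⟨y, hy⟩ := ses_desc hs (inv e ≫ g) (by
    rw [← Category.assoc, h3, Category.assoc, hs.w, comp_zero])
  refine ⟨y, ?_, ?_⟩
  · rw [← cancel_epi g, ← Category.assoc, ← h2, Category.assoc, hy]; simp
  · rw [← cancel_epi g, ← Category.assoc, hy, Category.assoc, h2.symm]; simp

/-- Endomorphisms of a projective cover lying over an automorphism are automorphisms. -/
lemma cover_iso {C : Type u} [Category.{v} C] [Abelian C] {P Z : C} (b : P ⟶ Z)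
    (hP : Projective P) (hb : Epi b) (hbmin : ∀ e : P ⟶ P, e ≫ b = b → IsIso e)
    (e : P ⟶ P) (c : Z ⟶ Z) (hc : IsIso c) (h : e ≫ b = b ≫ c) : IsIso e := by
  let p : P ⟶ P := Projective.factorThru (b ≫ inv c) b
  have hp : p ≫ b = b ≫ inv c := Projective.factorThru_comp _ _
  haveI h1 : IsIso (e ≫ p) := hbmin _ (by
    rw [Category.assoc, hp, ← Category.assoc, h]; simp)
  haveI h2 : IsIso (p ≫ e) := hbmin _ (by
    rw [Category.assoc, h, ← Category.assoc, hp]; simp)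
  haveI : Mono e := mono_of_mono e p
  haveI : Epi e := epi_of_epi p e
  exact isIso_of_mono_of_epi e

/-- Let `0 → A →f→ B →g→ C → 0` be an almost split sequence in `C`,
`b : P → C` a projective cover with kernel `i : Ω(C) → P`, `b' : P → B` a lifting of `b`
through `g`, and `h = (h₁, i) : Ω(C) → A ⊞ P` the kernel of `[f b'] : A ⊞ P → B`.
Then `0 → (0 → A) → (Ω(C) →h→ A⊞P) → (Ω(C) →i→ P) → 0`, with morphisms `(0, [1 0]ᵗ)`
and `(1, [0 1])`, is an almost split sequence in `S(C)`:  it is the almost split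
sequence in `S(C)` starting at `(0 → A)`. -/
theorem stmt6 (k : Type) [Field k]
    (C : Type u) [Category.{v} C] [Abelian C] [CategoryTheory.Linear k C]
    (hfin : ∀ X Y : C, FiniteDimensional k (X ⟶ Y)) (hKS : IsKrullSchmidt C)
    [EnoughProjectives C] [EnoughInjectives C]
    {A B Cc : C} (f : A ⟶ B) (g : B ⟶ Cc)
    (hass : IsASSGen (fun _ => True) f g)
    {P : C} (b : P ⟶ Cc) (hP : Projective P) (hb : Epi b)
    (hbmin : ∀ e : P ⟶ P, e ≫ b = b → IsIso e)
    {Om : C} (i : Om ⟶ P) (wi : i ≫ b = 0)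
    (hker : Nonempty (IsLimit (KernelFork.ofι i wi)))
    (b' : P ⟶ B) (hb' : b' ≫ g = b)
    (h₁ : Om ⟶ A) (wh : biprod.lift h₁ i ≫ biprod.desc f b' = 0)
    (hker' : Nonempty (IsLimit (KernelFork.ofι (biprod.lift h₁ i) wh))) :
    IsASSArrow (fun X : Arrow C => Mono X.hom)
      (Arrow.homMk (u := (0 : (0 : C) ⟶ Om)) (v := (biprod.inl : A ⟶ A ⊞ P))
        ((Limits.isZero_zero C).eq_of_src _ _) :
          Arrow.mk (0 : (0 : C) ⟶ A) ⟶ Arrow.mk (biprod.lift h₁ i))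
      (Arrow.homMk (u := 𝟙 Om) (v := (biprod.snd : A ⊞ P ⟶ P))
        (by simp) :
          Arrow.mk (biprod.lift h₁ i) ⟶ Arrow.mk i) := by
  haveI := hP
  haveI := hb
  obtain ⟨hker⟩ := hker
  obtain ⟨hker'⟩ := hker'
  obtain ⟨-, -, -, hS, ⟨hf1, hf2, hf3⟩, ⟨hg1, hg2, hg3⟩⟩ := hass
  haveI hfm := hS.mono
  haveI hge := hS.epi
  -- the two other short exact sequences
  have hO : IsSES i b := ses_of_kernel wi hker hb
  have hpe : Epi (biprod.desc f b') := by
    refine Preadditive.epi_of_cancel_zero _ (fun {W} x hx => ?_)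
    have h1 : f ≫ x = 0 := by
      rw [← biprod.inl_desc f b', Category.assoc, hx, comp_zero]
    have h2 : b' ≫ x = 0 := by
      rw [← biprod.inr_desc f b', Category.assoc, hx, comp_zero]
    obtain ⟨y, rfl⟩ := ses_desc hS x h1
    rw [← Category.assoc, hb'] at h2
    rw [(cancel_epi b).1 (h2.trans comp_zero.symm), comp_zero]
  have hM : IsSES (biprod.lift h₁ i) (biprod.desc f b') := ses_of_kernel wh hker' hpe
  haveI hMm := hM.mono
  haveI hOm := hO.mono
  have hpg : biprod.desc f b' ≫ g = biprod.snd ≫ b := by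
    ext
    · simp [hS.w]
    · simp [hb']
  have hsum : h₁ ≫ f + i ≫ b' = 0 := by simpa using wh
  refine ⟨?_, hM.mono, hO.mono, ⟨?_, ?_⟩, ⟨?_, ?_, ?_⟩, ⟨?_, ?_, ?_⟩⟩
  · exact (isZero_zero C).mono _
  · exact ⟨(isZero_zero C).mono _, inferInstanceAs (Epi (𝟙 Om)), zero_comp,
      (ShortComplex.exact_iff_mono _ rfl).2 (inferInstanceAs (Mono (𝟙 Om)))⟩
  · exact ⟨inferInstanceAs (Mono (biprod.inl : A ⟶ A ⊞ P)),
      inferInstanceAs (Epi (biprod.snd : A ⊞ P ⟶ P)), biprod.inl_snd,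
      (ShortComplex.Splitting.ofHasBinaryBiproduct A P).exact⟩
  · -- `u` is not a section
    rintro ⟨r, hr⟩
    have h1 : (biprod.inl : A ⟶ A ⊞ P) ≫ r.right = 𝟙 A := congrArg CommaMorphism.right hr
    have h2 : biprod.lift h₁ i ≫ r.right = 0 := by
      have := r.w
      simp at this
      exact this.symm
    obtain ⟨t, ht⟩ := ses_desc hM r.right h2
    refine hf1 ⟨t, ?_⟩
    rw [← h1, ← ht, biprod.inl_desc_assoc]
  · -- factorisation through `u`
    intro W hW φ hφ
    haveI : Mono W.hom := hW
    have hWs := ses_of_mono W.hom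
    let a : A ⟶ W.right := φ.right
    have hns : ¬ IsSection (a ≫ cokernel.π W.hom) := by
      rintro ⟨r, hr⟩
      refine hφ ⟨Arrow.homMk (u := 0) (v := cokernel.π W.hom ≫ r) (by simp), ?_⟩
      ext
      · exact (isZero_zero C).eq_of_src _ _
      · simpa [a] using hr
    obtain ⟨t, ht⟩ := hf2 _ trivial _ hns
    let q : P ⟶ W.right := Projective.factorThru (b' ≫ t) (cokernel.π W.hom)
    have hq : q ≫ cokernel.π W.hom = b' ≫ t := Projective.factorThru_comp _ _
    have hd : biprod.desc a q ≫ cokernel.π W.hom = biprod.desc f b' ≫ t := by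
      ext
      · simp [ht]
      · simp [hq]
    obtain ⟨l, hl⟩ := ses_lift hWs (biprod.lift h₁ i ≫ biprod.desc a q) (by
      rw [Category.assoc, hd, ← Category.assoc, wh, zero_comp])
    refine ⟨Arrow.homMk (u := l) (v := biprod.desc a q) hl, ?_⟩
    ext
    · exact (isZero_zero C).eq_of_src _ _
    · exact biprod.inl_desc a q
  · -- left minimality
    intro h hh
    let e : A ⊞ P ⟶ A ⊞ P := h.right
    let l : Om ⟶ Om := h.left
    have hl : l ≫ biprod.lift h₁ i = biprod.lift h₁ i ≫ e := h.w
    have he : biprod.inl ≫ e = biprod.inl := congrArg CommaMorphism.right hh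
    obtain ⟨eB, heB⟩ := ses_desc hM (e ≫ biprod.desc f b') (by
      rw [← Category.assoc, ← hl, Category.assoc, wh, comp_zero])
    have hfB : f ≫ eB = f := by
      have := congrArg (fun x => biprod.inl ≫ x) heB
      simp only [biprod.inl_desc_assoc, ← Category.assoc, he] at this
      simpa using this
    haveI iB : IsIso eB := hf3 _ hfB
    obtain ⟨c, hc⟩ := ses_desc hS (eB ≫ g) (by rw [← Category.assoc, hfB, hS.w])
    have ic : IsIso c := ses_iso_right hS (𝟙 A) eB c (by simp [hfB]) hc.symm inferInstance iB
    let e2 : P ⟶ P := biprod.inr ≫ e ≫ biprod.snd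
    have he2 : e ≫ biprod.snd = biprod.snd ≫ e2 := by
      ext
      · simp [← Category.assoc, he]
      · simp [e2]
    have hbe : e2 ≫ b = b ≫ c := by
      rw [← cancel_epi (biprod.snd : A ⊞ P ⟶ P), ← Category.assoc, ← he2, Category.assoc, ← hpg,
        ← Category.assoc, ← heB, Category.assoc, ← hc, ← Category.assoc, hpg, Category.assoc]
    have ie2 : IsIso e2 := cover_iso b hP hb hbmin e2 c ic hbe
    have hsp : IsSES (biprod.inl : A ⟶ A ⊞ P) (biprod.snd : A ⊞ P ⟶ P) :=
      ⟨inferInstance, inferInstance, biprod.inl_snd,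
        (ShortComplex.Splitting.ofHasBinaryBiproduct A P).exact⟩
    have ie : IsIso e := ses_iso_mid hsp (𝟙 A) e e2 (by simp [he]) he2 inferInstance ie2
    have il : IsIso l := ses_iso_left hM l e eB hl heB.symm ie iB
    haveI : IsIso h.left := il
    haveI : IsIso h.right := ie
    exact Arrow.isIso_of_isIso_left_of_isIso_right h
  · -- `v` is not a retraction
    rintro ⟨s, hs⟩
    have h1 : s.left ≫ 𝟙 Om = 𝟙 Om := congrArg CommaMorphism.left hs
    have h2 : s.right ≫ (biprod.snd : A ⊞ P ⟶ P) = 𝟙 P := congrArg CommaMorphism.right hs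
    have h3 : s.left ≫ biprod.lift h₁ i = i ≫ s.right := s.w
    have h1' : s.left = 𝟙 Om := (Category.comp_id _).symm.trans h1
    obtain ⟨t, ht⟩ := ses_desc hO (s.right ≫ biprod.desc f b') (by
      rw [← Category.assoc, ← h3, Category.assoc, wh, comp_zero])
    refine hg1 ⟨t, ?_⟩
    rw [← cancel_epi b, ← Category.assoc, ht, Category.assoc, hpg, ← Category.assoc, h2,
      Category.id_comp, Category.comp_id]
  · -- factorisation through `v`
    intro W hW φ hφ
    haveI : Mono W.hom := hW
    have hWs := ses_of_mono W.hom
    let p : W.left ⟶ Om := φ.left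
    let q : W.right ⟶ P := φ.right
    have hpq : p ≫ i = W.hom ≫ q := φ.w
    obtain ⟨c, hc⟩ := ses_desc hWs (q ≫ b) (by
      rw [← Category.assoc, ← hpq, Category.assoc, wi, comp_zero])
    have hns : ¬ IsRetractionHom c := by
      rintro ⟨s, hs⟩
      let σ : P ⟶ W.right := Projective.factorThru (b ≫ s) (cokernel.π W.hom)
      have hσ : σ ≫ cokernel.π W.hom = b ≫ s := Projective.factorThru_comp _ _
      obtain ⟨τ, hτ⟩ := ses_lift hWs (i ≫ σ) (by
        rw [Category.assoc, hσ, ← Category.assoc, wi, zero_comp])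
      have hy : (σ ≫ q) ≫ b = b := by
        rw [Category.assoc, ← hc, ← Category.assoc, hσ, Category.assoc, hs, Category.comp_id]
      have iy : IsIso (σ ≫ q) := hbmin _ hy
      have hx : (τ ≫ p) ≫ i = i ≫ σ ≫ q := by
        rw [Category.assoc, hpq, ← Category.assoc, hτ, Category.assoc]
      have ix : IsIso (τ ≫ p) :=
        ses_iso_left hO (τ ≫ p) (σ ≫ q) (𝟙 Cc) hx (by rw [hy, Category.comp_id]) iy inferInstance
      let ψ : Arrow.mk i ⟶ W := Arrow.homMk (u := τ) (v := σ) hτ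
      haveI : IsIso (ψ ≫ φ).left := ix
      haveI : IsIso (ψ ≫ φ).right := iy
      haveI : IsIso (ψ ≫ φ) := Arrow.isIso_of_isIso_left_of_isIso_right _
      exact hφ ⟨inv (ψ ≫ φ) ≫ ψ, by rw [Category.assoc, IsIso.inv_hom_id]⟩
    obtain ⟨c', hc'⟩ := hg2 _ trivial c hns
    obtain ⟨r, hr⟩ := ses_lift hS (cokernel.π W.hom ≫ c' - q ≫ b') (by
      rw [Preadditive.sub_comp, Category.assoc, Category.assoc, hc', hb', hc, sub_self])
    have hrr : W.hom ≫ r = p ≫ h₁ := by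
      rw [← cancel_mono f, Category.assoc, Category.assoc, hr, Preadditive.comp_sub,
        cokernel.condition_assoc, zero_comp, zero_sub, ← Category.assoc, ← hpq, Category.assoc,
        eq_neg_of_add_eq_zero_left hsum, Preadditive.comp_neg]
    refine ⟨Arrow.homMk (u := p) (v := biprod.lift r q) ?_, ?_⟩
    · change p ≫ biprod.lift h₁ i = W.hom ≫ biprod.lift r q
      ext
      · simp [hrr]
      · simp [hpq]
    · ext
      · exact Category.comp_id p
      · exact biprod.lift_snd r q
  · -- right minimality
    intro h hh
    let e : A ⊞ P ⟶ A ⊞ P := h.right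
    have hl1 : h.left ≫ 𝟙 Om = 𝟙 Om := congrArg CommaMorphism.left hh
    have hl : h.left = 𝟙 Om := (Category.comp_id _).symm.trans hl1
    have he : e ≫ biprod.snd = biprod.snd := congrArg CommaMorphism.right hh
    have hw : h.left ≫ biprod.lift h₁ i = biprod.lift h₁ i ≫ e := h.w
    obtain ⟨eB, heB⟩ := ses_desc hM (e ≫ biprod.desc f b') (by
      rw [← Category.assoc, ← hw, Category.assoc, wh, comp_zero])
    have hgB : eB ≫ g = g := by
      rw [← cancel_epi (biprod.desc f b'), ← Category.assoc, heB, Category.assoc, hpg,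
        ← Category.assoc, he]
    have iB : IsIso eB := hg3 _ hgB
    haveI il : IsIso h.left := by
      rw [hl]
      exact inferInstanceAs (IsIso (𝟙 Om))
    haveI ie : IsIso h.right := ses_iso_mid hM h.left e eB hw heB.symm il iB
    exact Arrow.isIso_of_isIso_left_of_isIso_right h
end

section
/- Let 0 → A →f→ B →g→ C → 0 be an almost split sequence in C. Then the sequence 0 → (A →id→ A) → (A →f→ B) → (0 → C) → 0 in H(C), with morphisms (1, f) and (0, g), is an almost split sequence in H(C); i.e. it is the almost split sequence in H(C) ending at (0 → C). -/
open CategoryTheory CategoryTheory.Limits Opposite ZeroObject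

universe v u

/-- Let `0 → A →f→ B →g→ C → 0` be an almost split sequence in `C`.
Then `0 → (A →id→ A) → (A →f→ B) → (0 → C) → 0`, with morphisms `(1, f)` and `(0, g)`,
is an almost split sequence in `H(C)`:  it is the almost split sequence in `H(C)` ending
at `(0 → C)`. -/
theorem stmt7 (k : Type) [Field k]
    (C : Type u) [Category.{v} C] [Abelian C] [CategoryTheory.Linear k C]
    (hfin : ∀ X Y : C, FiniteDimensional k (X ⟶ Y)) (hKS : IsKrullSchmidt C)
    [EnoughProjectives C] [EnoughInjectives C]
    {A B Cc : C} (f : A ⟶ B) (g : B ⟶ Cc)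
    (hass : IsASSGen (fun _ => True) f g) :
    IsASSArrow (fun _ : Arrow C => True)
      (Arrow.homMk (u := 𝟙 A) (v := f) (by simp) :
        Arrow.mk (𝟙 A) ⟶ Arrow.mk f)
      (Arrow.homMk (u := (0 : A ⟶ (0 : C))) (v := g)
        (by simp [hass.2.2.2.1.w]) :
        Arrow.mk f ⟶ Arrow.mk (0 : (0 : C) ⟶ Cc)) := by
  obtain ⟨-, -, -, hs, ⟨hf1, hf2, hf3⟩, ⟨hg1, hg2, hg3⟩⟩ := hass
  have hmono : Mono f := hs.mono
  have hlift : ∀ {X : C} (t : X ⟶ B), t ≫ g = 0 → ∃ x : X ⟶ A, x ≫ f = t := by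
    intro X t ht
    haveI : Mono (ShortComplex.mk f g hs.w).f := hmono
    exact ⟨hs.ex.lift t ht, hs.ex.lift_f t ht⟩
  refine ⟨trivial, trivial, trivial, ⟨?_, hs⟩, ⟨?_, ?_, ?_⟩, ⟨?_, ?_, ?_⟩⟩
  · have hw : (𝟙 A) ≫ (0 : A ⟶ (0 : C)) = 0 := by simp
    refine ⟨inferInstanceAs (Mono (𝟙 A)), ?_, hw, ?_⟩
    · change Epi (0 : A ⟶ (0 : C))
      exact ⟨fun a b _ => (isZero_zero C).eq_of_src a b⟩
    · change (ShortComplex.mk (𝟙 A) (0 : A ⟶ (0 : C)) hw).Exact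
      rw [ShortComplex.exact_iff_epi _ rfl]
      exact inferInstanceAs (Epi (𝟙 A))
  · rintro ⟨r, hr⟩
    exact hf1 ⟨r.right, congrArg CommaMorphism.right hr⟩
  · intro W _ φ hφ
    have hw : φ.left ≫ W.hom = φ.right := by
      have := φ.w
      simpa using this
    by_cases hb : IsSection (X := A) (Y := W.right) φ.right
    · obtain ⟨r, hr⟩ := hb
      refine absurd ⟨Arrow.homMk (u := W.hom ≫ r) (v := r) (by simp), ?_⟩ hφ
      ext
      · change φ.left ≫ W.hom ≫ r = 𝟙 A
        rw [← Category.assoc, hw]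
        exact hr
      · exact hr
    · obtain ⟨t, ht⟩ := hf2 W.right trivial φ.right hb
      refine ⟨Arrow.homMk (u := φ.left) (v := t) (hw.trans ht.symm), ?_⟩
      ext
      · exact Category.id_comp _
      · exact ht
  · intro h hh
    have h1 : h.left = 𝟙 A := by
      have : (𝟙 A) ≫ h.left = 𝟙 A := congrArg CommaMorphism.left hh
      rwa [Category.id_comp] at this
    haveI : IsIso h.right := hf3 h.right (congrArg CommaMorphism.right hh)
    haveI : IsIso h.left := by rw [h1]; exact inferInstanceAs (IsIso (𝟙 A))
    exact Arrow.isIso_of_isIso_left_of_isIso_right h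
  · rintro ⟨r, hr⟩
    exact hg1 ⟨r.right, congrArg CommaMorphism.right hr⟩
  · intro W _ φ hφ
    have hw : W.hom ≫ φ.right = 0 := by
      have h1 : φ.left ≫ (0 : (0 : C) ⟶ Cc) = W.hom ≫ φ.right := φ.w
      rw [← h1, comp_zero]
    have hb : ¬ IsRetractionHom (Y := W.right) (Z := Cc) φ.right := by
      rintro ⟨s, hs'⟩
      refine hφ ⟨Arrow.homMk (u := (0 : (0 : C) ⟶ W.left)) (v := s) ?_, ?_⟩
      · exact (isZero_zero C).eq_of_src _ _
      · ext
        · exact (isZero_zero C).eq_of_src _ _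
        · exact hs'
    obtain ⟨t, ht⟩ := hg2 W.right trivial φ.right hb
    obtain ⟨x, hx⟩ := hlift (W.hom ≫ t) (by rw [Category.assoc, ht, hw])
    refine ⟨Arrow.homMk (u := x) (v := t) hx, ?_⟩
    ext
    · exact (isZero_zero C).eq_of_tgt _ _
    · exact ht
  · intro h hh
    have hr : h.right ≫ g = g := congrArg CommaMorphism.right hh
    haveI hi : IsIso h.right := hg3 h.right hr
    obtain ⟨l, m, hl, hm⟩ : ∃ (l : A ⟶ A) (m : B ⟶ B), l = h.left ∧ m = h.right := ⟨_, _, rfl, rfl⟩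
    have hw : l ≫ f = f ≫ m := by subst hl hm; exact h.w
    have hmi : IsIso m := by subst hm; exact hi
    have hmg : m ≫ g = g := by subst hm; exact hr
    obtain ⟨y, hy⟩ := hlift (f ≫ inv m) (by
      rw [Category.assoc, (IsIso.inv_comp_eq m).2 hmg.symm, hs.w])
    haveI : IsIso h.left := by
      rw [← hl]
      refine ⟨y, ?_, ?_⟩
      · rw [← cancel_mono f, Category.assoc, hy, ← Category.assoc, hw]; simp
      · rw [← cancel_mono f, Category.assoc, hw, ← Category.assoc, hy]; simp
    exact Arrow.isIso_of_isIso_left_of_isIso_right h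
end

section
/- Let 0 → A →f→ B →g→ C → 0 be an almost split sequence in C. Then the sequence 0 → (A → 0) → (B →g→ C) → (C →id→ C) → 0 in H(C), with morphisms (f, 0) and (g, 1), is an almost split sequence in H(C); i.e. it is the almost split sequence in H(C) ending at (C →id→ C). -/
open CategoryTheory CategoryTheory.Limits Opposite ZeroObject

universe v u

/-- Let `0 → A →f→ B →g→ C → 0` be an almost split sequence in `C`.
Then `0 → (A → 0) → (B →g→ C) → (C →id→ C) → 0`, with morphisms `(f, 0)` and `(g, 1)`,
is an almost split sequence in `H(C)`:  it is the almost split sequence in `H(C)` ending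
at `(C →id→ C)`. -/
theorem stmt8 (k : Type) [Field k]
    (C : Type u) [Category.{v} C] [Abelian C] [CategoryTheory.Linear k C]
    (hfin : ∀ X Y : C, FiniteDimensional k (X ⟶ Y)) (hKS : IsKrullSchmidt C)
    [EnoughProjectives C] [EnoughInjectives C]
    {A B Cc : C} (f : A ⟶ B) (g : B ⟶ Cc)
    (hass : IsASSGen (fun _ => True) f g) :
    IsASSArrow (fun _ : Arrow C => True)
      (Arrow.homMk (u := f) (v := (0 : (0 : C) ⟶ Cc)) (by simp [hass.2.2.2.1.w]) :
        Arrow.mk (0 : A ⟶ (0 : C)) ⟶ Arrow.mk g)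
      (Arrow.homMk (u := g) (v := 𝟙 Cc) (by simp) :
        Arrow.mk g ⟶ Arrow.mk (𝟙 Cc)) := by
  obtain ⟨-, -, -, hses, ⟨hf1, hf2, hf3⟩, ⟨hg1, hg2, hg3⟩⟩ := hass
  have hmono := hses.mono
  have hepi := hses.epi
  have hw := hses.w
  have desc : ∀ {W : C} (t : B ⟶ W), f ≫ t = 0 → ∃ l : Cc ⟶ W, g ≫ l = t := by
    intro W t ht
    have : Epi (ShortComplex.mk f g hw).g := hepi
    exact ⟨hses.ex.desc t ht, hses.ex.g_desc t ht⟩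
  refine ⟨trivial, trivial, trivial, ⟨hses, ?_⟩, ⟨?_, ?_, ?_⟩, ⟨?_, ?_, ?_⟩⟩
  · have hm : Mono (0 : (0 : C) ⟶ Cc) := ⟨fun _ _ _ => (isZero_zero C).eq_of_tgt _ _⟩
    have he : Epi (𝟙 Cc) := inferInstance
    have w0 : (0 : (0 : C) ⟶ Cc) ≫ 𝟙 Cc = 0 := by simp
    refine ⟨hm, he, w0, ?_⟩
    have : Mono (ShortComplex.mk (0 : (0 : C) ⟶ Cc) (𝟙 Cc) w0).g := by
      dsimp; infer_instance
    exact (ShortComplex.exact_iff_mono _ rfl).2 this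
  · rintro ⟨r, hr⟩
    exact hf1 ⟨r.left, congrArg CommaMorphism.left hr⟩
  · intro W _ a ha
    have hna : ¬ IsSection a.left := by
      rintro ⟨r, hr⟩
      refine ha ⟨Arrow.homMk (u := r) (v := 0) ((isZero_zero C).eq_of_tgt _ _), ?_⟩
      apply Arrow.hom_ext
      · exact hr
      · exact (isZero_zero C).eq_of_tgt _ _
    obtain ⟨t, ht⟩ := hf2 W.left trivial a.left hna
    have haw : a.left ≫ W.hom = 0 := by
      have h := Arrow.w a
      rw [h]
      exact zero_comp
    obtain ⟨l, hl⟩ := desc (t ≫ W.hom) (by rw [← Category.assoc]; exact ht ▸ haw)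
    refine ⟨Arrow.homMk (u := t) (v := l) hl.symm, ?_⟩
    apply Arrow.hom_ext
    · exact ht
    · exact (isZero_zero C).eq_of_src _ _
  · intro h hh
    have h1 : f ≫ h.left = f := congrArg CommaMorphism.left hh
    have i1 : IsIso h.left := hf3 _ h1
    have hsq : h.left ≫ g = g ≫ h.right := Arrow.w h
    obtain ⟨l, hl⟩ := desc (inv h.left ≫ g) (by
      have : f ≫ inv h.left = f := (IsIso.comp_inv_eq _).2 h1.symm
      rw [← Category.assoc]
      exact (congrArg (· ≫ g) this).trans hw)
    have i2 : IsIso h.right := by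
      refine ⟨l, ?_, ?_⟩
      · apply hepi.left_cancellation
        change g ≫ h.right ≫ l = g ≫ 𝟙 _
        rw [← Category.assoc, ← hsq, Category.assoc, hl, IsIso.hom_inv_id_assoc]
        exact (Category.comp_id g).symm
      · apply hepi.left_cancellation
        change g ≫ l ≫ h.right = g ≫ 𝟙 _
        rw [← Category.assoc, hl, Category.assoc, ← hsq, IsIso.inv_hom_id_assoc]
        exact (Category.comp_id g).symm
    exact Arrow.isIso_of_isIso_left_of_isIso_right h
  · rintro ⟨s, hs⟩
    exact hg1 ⟨s.left, congrArg CommaMorphism.left hs⟩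
  · intro W _ a ha
    have hsq : a.left = W.hom ≫ a.right := by
      have h := Arrow.w a
      exact (Category.comp_id a.left).symm.trans h
    have hna : ¬ IsRetractionHom a.left := by
      rintro ⟨s, hs⟩
      refine ha ⟨Arrow.homMk (u := s) (v := s ≫ W.hom) (Category.id_comp _).symm, ?_⟩
      apply Arrow.hom_ext
      · exact hs
      · change (s ≫ W.hom) ≫ a.right = 𝟙 _
        rw [Category.assoc, ← hsq]
        exact hs
    obtain ⟨t, ht⟩ := hg2 W.left trivial a.left hna
    refine ⟨Arrow.homMk (u := t) (v := a.right) (ht.trans hsq), ?_⟩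
    apply Arrow.hom_ext
    · exact ht
    · exact Category.comp_id _
  · intro h hh
    have i1 : IsIso h.left := hg3 _ (congrArg CommaMorphism.left hh)
    have h2 : h.right = 𝟙 Cc :=
      (Category.comp_id h.right).symm.trans (congrArg CommaMorphism.right hh)
    have i2 : IsIso h.right := by rw [h2]; exact inferInstanceAs (IsIso (𝟙 Cc))
    exact Arrow.isIso_of_isIso_left_of_isIso_right h
end

section
/- Let k be an algebraically closed field of characteristic different from 2, n ≥ 1, and let T_n(k) be the algebra of lower triangular n×n matrices over k (equivalently, the path algebra of the linearly oriented quiver of type A_n : 1 → 2 → ⋯ → n). Then the monomorphism category S(mod T_n(k)) is of finite representation type if and only if n ≤ 5. -/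
open CategoryTheory CategoryTheory.Limits

/-- The algebra of lower triangular `n × n` matrices over `k`. -/
def lowerTriangularAlg (k : Type) [CommRing k] (n : ℕ) :
    Subalgebra k (Matrix (Fin n) (Fin n) k) where
  carrier := {M | ∀ i j : Fin n, i < j → M i j = 0}
  add_mem' := fun hA hB i j hij => by
    simp [Matrix.add_apply, hA i j hij, hB i j hij]
  zero_mem' := fun i j _ => rfl
  mul_mem' := fun {A B} hA hB i j hij => by
    simp only [Matrix.mul_apply]
    apply Finset.sum_eq_zero
    intro l _
    rcases lt_or_ge i l with h | h
    · rw [hA i l h, zero_mul]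
    · rw [hB l j (lt_of_le_of_lt h hij), mul_zero]
  one_mem' := fun i j hij => Matrix.one_apply_ne (ne_of_lt hij)
  algebraMap_mem' := fun r i j hij => by
    simp [Matrix.algebraMap_matrix_apply, ne_of_lt hij]

/-- The componentwise direct sum of two objects of the morphism category. -/
noncomputable def arrowBiprod {C : Type*} [Category C] [Preadditive C]
    [HasBinaryBiproducts C] (f g : Arrow C) : Arrow C :=
  Arrow.mk (biprod.map f.hom g.hom)

/-- Indecomposability of an object of the subcategory of the morphism category given by
the predicate `P`. -/
noncomputable def IndecArrowIn {C : Type*} [Category C] [Preadditive C]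
    [HasBinaryBiproducts C] (P : Arrow C → Prop) (X : Arrow C) : Prop :=
  ¬ IsZero X ∧ ∀ Y Z : Arrow C, P Y → P Z →
    Nonempty (X ≅ arrowBiprod Y Z) → IsZero Y ∨ IsZero Z

/-- The subcategory given by `P` has finite representation type. -/
noncomputable def FRTArrow {C : Type*} [Category C] [Preadditive C]
    [HasBinaryBiproducts C] (P : Arrow C → Prop) : Prop :=
  ∃ s : Set (Arrow C), s.Finite ∧
    ∀ X, P X → IndecArrowIn P X → ∃ Y ∈ s, Nonempty (X ≅ Y)

/-- Objects of the monomorphism category `S(mod Λ)` of finite dimensional right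
`Λ`-modules (= left modules over `Λᵐᵒᵖ`): injective homomorphisms between finitely
generated modules. -/
def SModObj (Λ : Type) [Ring Λ] (X : Arrow (ModuleCat Λᵐᵒᵖ)) : Prop :=
  Module.Finite Λᵐᵒᵖ X.left ∧ Module.Finite Λᵐᵒᵖ X.right ∧ Mono X.hom

section Helpers
universe u



/-- A finite dimensional vector space with a family of subspaces. -/
structure PRep (k : Type) [Field k] (α : Type) where
  V : Type u
  [grp : AddCommGroup V]
  [mod : Module k V]
  [fin : FiniteDimensional k V]
  F : α → Submodule k V

attribute [instance] PRep.grp PRep.mod PRep.fin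

section PosetReps

variable {k : Type} [Field k] {α β : Type}

/-- Morphisms of families of subspaces. -/
def PMor (X Y : PRep.{u} k α) (f : X.V →ₗ[k] Y.V) : Prop :=
  ∀ p, ∀ x ∈ X.F p, f x ∈ Y.F p

/-- Endomorphisms factoring through a member of the list `M`. -/
def FacSet {ι : Type} (M : ι → PRep.{u} k α) (X : PRep.{u} k α) : Set (X.V →ₗ[k] X.V) :=
  {h | ∃ i f g, PMor X (M i) f ∧ PMor (M i) X g ∧ h = g ∘ₗ f}

/-- Monotonicity. -/
def PMono (le : α → α → Prop) (X : PRep.{u} k α) : Prop :=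
  ∀ p q, le p q → X.F p ≤ X.F q

variable (k) in
/-- Finite type, in the form: all objects lie in `add` of a finite list. -/
def FT (α : Type) (le : α → α → Prop) : Prop :=
  ∃ (ι : Type) (_ : Finite ι) (M : ι → PRep.{u} k α), ∀ X : PRep.{u} k α, PMono le X →
    (LinearMap.id : X.V →ₗ[k] X.V) ∈ AddSubmonoid.closure (FacSet M X)

theorem FT.mono {le : α → α → Prop} (hr : ∀ a, le a a) (ht : ∀ a b c, le a b → le b c → le a c)
    (h : FT.{u} k α le) :
    ∃ (ι : Type) (_ : Finite ι) (M : ι → PRep.{u} k α), (∀ i, PMono le (M i)) ∧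
      ∀ X : PRep.{u} k α, PMono le X →
        (LinearMap.id : X.V →ₗ[k] X.V) ∈ AddSubmonoid.closure (FacSet M X) := by
  obtain ⟨ι, hι, M, hM⟩ := h
  refine ⟨ι, hι, fun i => ⟨(M i).V, fun s => ⨆ t, ⨆ _ : le t s, (M i).F t⟩, ?_, ?_⟩
  · intro i p q hpq
    exact iSup₂_le fun t htp => le_iSup₂_of_le t (ht _ _ _ htp hpq) le_rfl
  · intro X hX
    refine AddSubmonoid.closure_mono ?_ (hM X hX)
    rintro h ⟨i, f, g, hf, hg, rfl⟩
    refine ⟨i, f, g, ?_, ?_, rfl⟩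
    · intro p x hx
      exact (le_iSup₂_of_le (f := fun t (_ : le t p) => (M i).F t) p (hr p) le_rfl) (hf p x hx)
    · intro p
      change (⨆ t, ⨆ _ : le t p, (M i).F t) ≤ (X.F p).comap g
      exact iSup₂_le fun t htp x hx => hX _ _ htp (hg t x hx)

/-- Restriction to a full sub-poset. -/
theorem FT.restrict {leα : α → α → Prop} {leβ : β → β → Prop} (e : α → β)
    (he : ∀ a b, leα a b ↔ leβ (e a) (e b)) (hr : ∀ a, leα a a)
    (ht : ∀ a b c, leβ a b → leβ b c → leβ a c)
    (h : FT.{u} k β leβ) : FT.{u} k α leα := by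
  obtain ⟨ι, hι, M, hM⟩ := h
  refine ⟨ι, hι, fun i => ⟨(M i).V, fun s => (M i).F (e s)⟩, ?_⟩
  intro X hX
  let X' : PRep.{u} k β := ⟨X.V, fun b => ⨆ t, ⨆ _ : leβ (e t) b, X.F t⟩
  have hX' : PMono leβ X' := fun p q hpq =>
    iSup₂_le fun t htp => le_iSup₂_of_le t (ht _ _ _ htp hpq) le_rfl
  refine AddSubmonoid.closure_mono ?_ (hM X' hX')
  rintro h ⟨i, f, g, hf, hg, rfl⟩
  have key : ∀ s, X'.F (e s) = X.F s := by
    intro s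
    apply le_antisymm
    · exact iSup₂_le fun t htp => hX _ _ ((he _ _).2 htp)
    · exact le_iSup₂_of_le s ((he _ _).1 (hr s)) le_rfl
  refine ⟨i, f, g, ?_, ?_, rfl⟩
  · intro p x hx
    exact hf (e p) x (by rw [key]; exact hx)
  · intro p x hx
    have := hg (e p) x hx
    rw [key] at this
    exact this

theorem FT.empty [IsEmpty α] (le : α → α → Prop) : FT.{u} k α le := by
  refine ⟨Unit, inferInstance, fun _ => ⟨ULift.{u} k, fun _ => ⊤⟩, ?_⟩
  intro X _
  let b := Module.finBasis k X.V
  have : (LinearMap.id : X.V →ₗ[k] X.V) =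
      ∑ i, (LinearMap.toSpanSingleton k X.V (b i) ∘ₗ
        (ULift.moduleEquiv : ULift.{u} k ≃ₗ[k] k).toLinearMap) ∘ₗ
        ((ULift.moduleEquiv : ULift.{u} k ≃ₗ[k] k).symm.toLinearMap ∘ₗ b.coord i) := by
    ext x
    simp [LinearMap.sum_apply, LinearMap.toSpanSingleton_apply, b.sum_repr]
  rw [this]
  refine sum_mem fun i _ => AddSubmonoid.subset_closure ⟨(), _, _, ?_, ?_, rfl⟩
  · intro p; exact isEmptyElim p
  · intro p; exact isEmptyElim p

/-- Two flags have a common adapted (generating) family. -/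
theorem two_flags (C1 C2 : Set α) : ∀ (d : ℕ) (V : Type u) [AddCommGroup V] [Module k V]
    [FiniteDimensional k V] (_ : Module.finrank k V = d) (G : α → Submodule k V)
    (_ : ∀ s ∈ C1, ∀ t ∈ C1, G s ≤ G t ∨ G t ≤ G s)
    (_ : ∀ s ∈ C2, ∀ t ∈ C2, G s ≤ G t ∨ G t ≤ G s),
    ∃ (m : ℕ) (b : Fin m → V) (φ : Fin m → (V →ₗ[k] k)), (∀ x, ∑ j, φ j x • b j = x) ∧
      ∀ s, s ∈ C1 ∪ C2 → ∀ x ∈ G s, ∀ j, φ j x ≠ 0 → b j ∈ G s := by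
  intro d
  induction d with
  | zero =>
    intro V _ _ _ hd G h1 h2
    have : Subsingleton V := Module.finrank_zero_iff.1 hd
    exact ⟨0, Fin.elim0, Fin.elim0, fun x => Subsingleton.elim _ _, fun s _ x _ j => j.elim0⟩
  | succ d ih =>
    intro V _ _ _ hd G h1 h2
    -- a vector
    have hv : ∃ v : V, v ≠ 0 ∧ ∀ s ∈ C1, v ∈ G s ∨ G s = ⊥ := by
      have : Nontrivial V := Module.nontrivial_of_finrank_pos (R := k) (by omega)
      by_cases hne : ∃ s ∈ C1, G s ≠ ⊥
      · let T : Set (Submodule k V) := {H | ∃ s ∈ C1, G s = H ∧ H ≠ ⊥}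
        have hT : T.Nonempty := by
          obtain ⟨s, hs, hs'⟩ := hne
          exact ⟨G s, s, hs, rfl, hs'⟩
        obtain ⟨H, ⟨s, hs, rfl, hs0⟩, hmin⟩ := (wellFounded_lt (α := Submodule k V)).has_min T hT
        obtain ⟨v, hv, hv0⟩ := Submodule.exists_mem_ne_zero_of_ne_bot hs0
        refine ⟨v, hv0, fun t ht => ?_⟩
        by_cases ht0 : G t = ⊥
        · exact Or.inr ht0
        · left
          rcases h1 s hs t ht with h | h
          · exact h hv
          · have := hmin (G t) ⟨t, ht, rfl, ht0⟩
            rcases h.lt_or_eq with h' | h'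
            · exact absurd h' this
            · rw [h']; exact hv
      · push Not at hne
        obtain ⟨v, hv⟩ := exists_ne (0 : V)
        exact ⟨v, hv, fun s hs => Or.inr (hne s hs)⟩
    obtain ⟨v, hv0, hv1⟩ := hv
    have hH : ∃ H : Submodule k V, v ∉ H ∧ ∀ s ∈ C2, v ∉ G s → G s ≤ H := by
      let T : Set (Submodule k V) := {H | ∃ s ∈ C2, G s = H ∧ v ∉ H}
      by_cases hT : T.Nonempty
      · obtain ⟨H, ⟨s, hs, rfl, hs0⟩, hmax⟩ := (wellFounded_gt (α := Submodule k V)).has_min T hT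
        refine ⟨G s, hs0, fun t ht htv => ?_⟩
        rcases h2 s hs t ht with h | h
        · rcases h.lt_or_eq with h' | h'
          · exact absurd h' (hmax (G t) ⟨t, ht, rfl, htv⟩)
          · rw [h']
        · exact h
      · refine ⟨⊥, by simpa using hv0, fun s hs hsv => ?_⟩
        exact absurd ⟨G s, s, hs, rfl, hsv⟩ hT
    obtain ⟨H, hvH, hH⟩ := hH
    obtain ⟨φ0, hφv, hφH⟩ := Submodule.exists_le_ker_of_notMem hvH
    let φ : V →ₗ[k] k := (φ0 v)⁻¹ • φ0
    have hφ1 : φ v = 1 := by simp [φ, hφv]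
    have hφ2 : ∀ x ∈ H, φ x = 0 := by
      intro x hx
      have : φ0 x = 0 := hφH hx
      simp [φ, this]
    let V1 := LinearMap.ker φ
    have hfr : Module.finrank k V1 = d := by
      have h := LinearMap.finrank_range_add_finrank_ker φ
      have hs : Function.Surjective φ := fun c => ⟨c • v, by simp [hφ1]⟩
      rw [LinearMap.range_eq_top.2 hs, finrank_top, Module.finrank_self] at h
      change _ + Module.finrank k V1 = _ at h
      omega
    obtain ⟨m, b, ψ, hb, hG⟩ := ih V1 hfr (fun s => (G s).comap V1.subtype)
      (fun s hs t ht => (h1 s hs t ht).imp (fun h => Submodule.comap_mono h)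
        (fun h => Submodule.comap_mono h))
      (fun s hs t ht => (h2 s hs t ht).imp (fun h => Submodule.comap_mono h)
        (fun h => Submodule.comap_mono h))
    let π : V →ₗ[k] V1 := LinearMap.codRestrict V1 (LinearMap.id - φ.smulRight v) (by
      intro x; simp [V1, hφ1])
    have hπ : ∀ x, (π x : V) = x - φ x • v := fun x => rfl
    refine ⟨m + 1, Fin.cons v (fun j => (b j : V)), Fin.cons φ (fun j => ψ j ∘ₗ π), ?_, ?_⟩
    · intro x
      rw [Fin.sum_univ_succ]
      simp only [Fin.cons_zero, Fin.cons_succ, LinearMap.comp_apply]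
      have := congrArg (Subtype.val) (hb (π x))
      simp only [AddSubmonoidClass.coe_finsetSum, Submodule.coe_smul, hπ] at this
      rw [this]; abel
    · intro s hs x hx
      have hor : v ∈ G s ∨ φ x = 0 := by
        rcases hs with hs | hs
        · rcases hv1 s hs with h | h
          · exact Or.inl h
          · rw [h, Submodule.mem_bot] at hx
            right; simp [hx]
        · by_cases hvs : v ∈ G s
          · exact Or.inl hvs
          · exact Or.inr (hφ2 x (hH s hs hvs hx))
      have hπx : (π x : V) ∈ G s := by
        rw [hπ]
        rcases hor with h | h
        · exact sub_mem hx (Submodule.smul_mem _ _ h)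
        · simpa [h] using hx
      intro j
      refine Fin.cases ?_ ?_ j
      · intro h
        simp only [Fin.cons_zero] at h ⊢
        exact hor.resolve_right h
      · intro j h
        simp only [Fin.cons_succ] at h ⊢
        exact hG s hs (π x) hπx j h

end PosetReps

section Step

variable {k : Type} [Field k] {α β : Type}

theorem exists_split {V : Type u} [AddCommGroup V] [Module k V] (P Q : Submodule k V) :
    ∃ τ : V →ₗ[k] V, ∀ x ∈ P ⊔ Q, τ x ∈ P ∧ τ x - x ∈ Q := by
  let f : P × Q →ₗ[k] (P ⊔ Q : Submodule k V) :=
    LinearMap.codRestrict _ (LinearMap.coprod P.subtype Q.subtype) (by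
      rintro ⟨p, q⟩
      exact add_mem (Submodule.mem_sup_left p.2) (Submodule.mem_sup_right q.2))
  have hf : Function.Surjective f := by
    rintro ⟨x, hx⟩
    obtain ⟨p, hp, q, hq, rfl⟩ := Submodule.mem_sup.1 hx
    exact ⟨(⟨p, hp⟩, ⟨q, hq⟩), rfl⟩
  obtain ⟨g, hg⟩ := f.exists_rightInverse_of_surjective (LinearMap.range_eq_top.2 hf)
  obtain ⟨τ, hτ⟩ := LinearMap.exists_extend (P.subtype ∘ₗ LinearMap.fst k P Q ∘ₗ g)
  refine ⟨τ, fun x hx => ?_⟩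
  have h1 : τ x = ((g ⟨x, hx⟩).1 : V) := LinearMap.congr_fun hτ ⟨x, hx⟩
  have h2 : ((g ⟨x, hx⟩).1 : V) + ((g ⟨x, hx⟩).2 : V) = x :=
    congrArg Subtype.val (LinearMap.congr_fun hg ⟨x, hx⟩)
  refine ⟨by rw [h1]; exact (g ⟨x, hx⟩).1.2, ?_⟩
  have : τ x - x = - ((g ⟨x, hx⟩).2 : V) := by rw [h1]; nth_rewrite 2 [← h2]; abel
  rw [this]
  exact neg_mem (g ⟨x, hx⟩).2.2

/-- The derived representation. -/
def derivRep (a : α) (e : β → α × α) (X : PRep.{u} k α) : PRep.{u} k β :=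
  ⟨X.F a, fun b => (X.F (e b).1 ⊔ X.F (e b).2).comap (X.F a).subtype⟩

open Classical in
/-- Generators of the subspaces in the integrated representation. -/
def integGen (le : α → α → Prop) (a : α) (e : β → α × α) {Y : Type u} [AddCommGroup Y] [Module k Y]
    (FY : β → Submodule k Y) (s : α) : Set (Y × (β → Y)) :=
  {x | (s = a ∧ ∃ y, x = (y, 0)) ∨ ∃ b, ∃ z ∈ FY b, (e b = (s, s) ∧ x = (z, 0)) ∨
    (le (e b).1 s ∧ x = (0, Pi.single b z)) ∨ (le (e b).2 s ∧ x = (-z, Pi.single b z))}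

/-- The integrated representation. -/
def integRep [Finite β] (le : α → α → Prop) (a : α) (e : β → α × α) (Y : PRep.{u} k β) :
    PRep.{u} k α :=
  ⟨Y.V × (β → Y.V), fun s => Submodule.span k (integGen le a e Y.F s)⟩

/-- Functoriality. -/
def integMap {Y Z : Type u} [AddCommGroup Y] [Module k Y] [AddCommGroup Z] [Module k Z]
    (f : Y →ₗ[k] Z) : (Y × (β → Y)) →ₗ[k] (Z × (β → Z)) :=
  LinearMap.prodMap f (LinearMap.compLeft f β)

theorem integMap_mor [Finite β] (le : α → α → Prop) (a : α) (e : β → α × α)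
    {Y Z : PRep.{u} k β} {f : Y.V →ₗ[k] Z.V} (hf : PMor Y Z f) :
    PMor (integRep le a e Y) (integRep le a e Z) (integMap f) := by
  classical
  intro s
  change Submodule.span k (integGen le a e Y.F s) ≤
    (Submodule.span k (integGen le a e Z.F s)).comap (integMap f)
  rw [Submodule.span_le]
  have hsingle : ∀ (b : β) (z : Y.V),
      (LinearMap.compLeft f β) (Pi.single b z) = Pi.single b (f z) := by
    intro b z
    ext c
    by_cases h : c = b
    · subst h; simp
    · simp [h]
  rintro x (⟨hs, y, rfl⟩ | ⟨b, z, hz, (⟨h, rfl⟩ | ⟨h, rfl⟩ | ⟨h, rfl⟩)⟩)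
  · exact Submodule.subset_span (Or.inl ⟨hs, f y, by simp [integMap]⟩)
  · exact Submodule.subset_span (Or.inr ⟨b, f z, hf b z hz, Or.inl ⟨h, by simp [integMap]⟩⟩)
  · exact Submodule.subset_span (Or.inr ⟨b, f z, hf b z hz, Or.inr (Or.inl ⟨h, by
      simp only [integMap, LinearMap.prodMap_apply, hsingle, map_zero]⟩)⟩)
  · exact Submodule.subset_span (Or.inr ⟨b, f z, hf b z hz, Or.inr (Or.inr ⟨h, by
      simp only [integMap, LinearMap.prodMap_apply, hsingle, map_neg]⟩)⟩)

open Classical in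
/-- One-dimensional representations. -/
noncomputable def oneRep (E : Set α) : PRep.{u} k α :=
  ⟨ULift.{u} k, fun s => if s ∈ E then ⊤ else ⊥⟩

theorem FT.step [Finite α] [Finite β] {le : α → α → Prop} {le' : β → β → Prop}
    (hr : ∀ a, le a a) (a : α) (C1 C2 : Set α)
    (hcov : ∀ s, le s a ∨ s ∈ C1 ∪ C2)
    (hc1 : ∀ s ∈ C1, ∀ t ∈ C1, le s t ∨ le t s)
    (hc2 : ∀ s ∈ C2, ∀ t ∈ C2, le s t ∨ le t s)
    (e : β → α × α)
    (hle : ∀ b b', le' b b' → (le (e b).1 (e b').1 ∨ le (e b).1 (e b').2) ∧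
      (le (e b).2 (e b').1 ∨ le (e b).2 (e b').2))
    (hs : ∀ s, s = a ∨ ∃ b, e b = (s, s))
    (hp : ∀ p ∈ C1, ∀ q ∈ C2, le p q ∨ le q p ∨ ∃ b, e b = (p, q))
    (ht : ∀ a b c, le a b → le b c → le a c)
    (h : FT.{u} k β le') : FT.{u} k α le := by
  classical
  have := Fintype.ofFinite β
  obtain ⟨ι, hι, M, hM⟩ := h
  refine ⟨ι ⊕ Set α, inferInstance,
    Sum.elim (fun i => integRep le a e (M i)) (fun E => oneRep E), ?_⟩
  intro X hX
  set A := X.F a with hA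
  let D := derivRep a e X
  have hD : PMono le' D := by
    intro b b' hb
    obtain ⟨h1, h2⟩ := hle b b' hb
    refine Submodule.comap_mono (sup_le ?_ ?_)
    · rcases h1 with h | h
      · exact (hX _ _ h).trans le_sup_left
      · exact (hX _ _ h).trans le_sup_right
    · rcases h2 with h | h
      · exact (hX _ _ h).trans le_sup_left
      · exact (hX _ _ h).trans le_sup_right
  have hid := hM D hD
  choose τ hτ using fun b => exists_split (X.F (e b).1) (X.F (e b).2)
  let FD : β → Submodule k A := fun b => (X.F (e b).1 ⊔ X.F (e b).2).comap A.subtype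
  let US : α → Submodule k (A × (β → A)) := fun s => Submodule.span k (integGen le a e FD s)
  let c : (A × (β → A)) →ₗ[k] X.V :=
    LinearMap.coprod A.subtype (∑ b, τ b ∘ₗ A.subtype ∘ₗ LinearMap.proj b)
  have hcv : ∀ (x : A) (y : β → A), c (x, y) = x + ∑ b, τ b (y b) := by
    intro x y; simp [c]
  have hcsingle : ∀ (x : A) (b : β) (z : A), c (x, Pi.single b z) = x + τ b z := by
    intro x b z
    rw [hcv, Finset.sum_eq_single b]
    · simp
    · intro b' _ hb'; simp [hb']
    · simp
  have hc : ∀ s, US s ≤ (X.F s).comap c := by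
    intro s
    change Submodule.span k (integGen le a e FD s) ≤ (X.F s).comap c
    rw [Submodule.span_le]
    rintro x (⟨hs, y, rfl⟩ | ⟨b, z, hz, (⟨h, rfl⟩ | ⟨h, rfl⟩ | ⟨h, rfl⟩)⟩)
    · change c (y, 0) ∈ X.F s
      rw [hcv]
      subst hs
      have : (y : X.V) ∈ X.F s := y.2
      simpa using this
    · change c (z, 0) ∈ X.F s
      have hz' : (z : X.V) ∈ X.F (e b).1 ⊔ X.F (e b).2 := hz
      rw [h] at hz'
      rw [hcv]
      simpa using hz'
    · change c (0, Pi.single b z) ∈ X.F s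
      rw [hcsingle]
      simpa using hX _ _ h (hτ b z hz).1
    · change c (-z, Pi.single b z) ∈ X.F s
      rw [hcsingle]
      have := hX _ _ h (hτ b z hz).2
      rw [sub_eq_neg_add] at this
      simpa using this
  -- per-vector lemma
  have hvec : ∀ x0 : X.V, ∃ (x : X.V) (w : A × (β → A)) (r : X.V), x - x0 ∈ A ∧ c w + r = x ∧
      ∀ s ∈ C1 ∪ C2, (∃ l ∈ X.F s, l - x0 ∈ A) → r ∈ X.F s ∧
        ∃ l ∈ X.F s, ∃ hl : l - x ∈ A, (⟨l - x, hl⟩, 0) + w ∈ US s := by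
    intro x0
    let E : Set α := {s | ∃ l ∈ X.F s, l - x0 ∈ A}
    have hsub : ∀ {x l : X.V}, x - x0 ∈ A → l - x0 ∈ A → l - x ∈ A := by
      intro x l h1 h2
      have := sub_mem h2 h1
      simpa using this
    -- least element case
    have hleast : ∀ m, m ∈ E → (∀ s ∈ C1 ∪ C2, s ∈ E → le m s) →
        ∃ (x : X.V) (w : A × (β → A)) (r : X.V), x - x0 ∈ A ∧ c w + r = x ∧
        ∀ s ∈ C1 ∪ C2, (∃ l ∈ X.F s, l - x0 ∈ A) → r ∈ X.F s ∧
        ∃ l ∈ X.F s, ∃ hl : l - x ∈ A, (⟨l - x, hl⟩, 0) + w ∈ US s := by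
      rintro m ⟨x, hx, hx0⟩ hm
      refine ⟨x, 0, x, hx0, by simp, fun s hs hsE => ?_⟩
      have hxs := hX _ _ (hm s hs hsE) hx
      refine ⟨hxs, x, hxs, by simp, ?_⟩
      have : ((⟨x - x, by simp⟩, 0) + 0 : A × (β → A)) = 0 := by ext <;> simp
      rw [this]
      exact zero_mem _
    have hminC : ∀ C : Set α, (∀ s ∈ C, ∀ t ∈ C, le s t ∨ le t s) →
        (∀ s ∈ C, s ∉ E) ∨ ∃ m ∈ C, m ∈ E ∧ ∀ s ∈ C, s ∈ E → le m s := by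
      intro C hC
      by_cases hne : ∃ s, s ∈ C ∧ s ∈ E
      · right
        let T : Set α := C ∩ E
        let ext_r : α → α → Prop := fun x y => le x y ∧ ¬ le y x
        have hwf : WellFounded ext_r := by
          have : IsTrans α ext_r := ⟨fun x y z h1 h2 =>
            ⟨ht _ _ _ h1.1 h2.1, fun h => h1.2 (ht _ _ _ h2.1 h)⟩⟩
          have : Std.Irrefl ext_r := ⟨fun x h => h.2 h.1⟩
          exact Finite.wellFounded_of_trans_of_irrefl ext_r
        obtain ⟨m, hm, hmin⟩ := hwf.has_min T hne
        refine ⟨m, hm.1, hm.2, fun s hs hsE => ?_⟩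
        rcases hC m hm.1 s hs with h | h
        · exact h
        · by_contra hn
          exact hmin s ⟨hs, hsE⟩ ⟨h, hn⟩
      · left
        exact fun s hs hsE => hne ⟨s, hs, hsE⟩
    rcases hminC C1 hc1 with h1 | ⟨p, hpC, hpE, hpm⟩
    · rcases hminC C2 hc2 with h2 | ⟨q, hqC, hqE, hqm⟩
      · refine ⟨x0, 0, x0, by simp, by simp, fun s hs hsE => ?_⟩
        rcases hs with hs | hs
        · exact absurd hsE (h1 s hs)
        · exact absurd hsE (h2 s hs)
      · refine hleast q hqE fun s hs hsE => ?_
        rcases hs with hs | hs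
        · exact absurd hsE (h1 s hs)
        · exact hqm s hs hsE
    · rcases hminC C2 hc2 with h2 | ⟨q, hqC, hqE, hqm⟩
      · refine hleast p hpE fun s hs hsE => ?_
        rcases hs with hs | hs
        · exact hpm s hs hsE
        · exact absurd hsE (h2 s hs)
      · rcases hp p hpC q hqC with h | h | ⟨b, hb⟩
        · refine hleast p hpE fun s hs hsE => ?_
          rcases hs with hs | hs
          · exact hpm s hs hsE
          · exact ht _ _ _ h (hqm s hs hsE)
        · refine hleast q hqE fun s hs hsE => ?_
          rcases hs with hs | hs
          · exact ht _ _ _ h (hpm s hs hsE)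
          · exact hqm s hs hsE
        · obtain ⟨x, hx, hx0⟩ := hpE
          obtain ⟨y, hy, hy0⟩ := hqE
          let z : A := ⟨x - y, hsub hy0 hx0⟩
          have hz : (z : X.V) ∈ X.F (e b).1 ⊔ X.F (e b).2 := by
            rw [hb]
            exact sub_mem (Submodule.mem_sup_left hx) (Submodule.mem_sup_right hy)
          have hzD : z ∈ FD b := hz
          have hτ1 := (hτ b z hz).1
          have hτ2 := (hτ b z hz).2
          rw [hb] at hτ1 hτ2
          refine ⟨x, (0, Pi.single b z), x - τ b z, hx0, ?_, fun s hs hsE => ?_⟩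
          · rw [hcsingle]; simp
          · have hr1 : x - τ b z ∈ X.F p := sub_mem hx hτ1
            have hr2 : x - τ b z ∈ X.F q := by
              have := sub_mem hy hτ2
              have e1 : y - (τ b z - z) = x - τ b z := by simp only [z]; abel
              rwa [e1] at this
            have hcase : le p s ∨ le q s := by
              rcases hs with hs | hs
              · exact Or.inl (hpm s hs hsE)
              · exact Or.inr (hqm s hs hsE)
            rcases hcase with h | h
            · refine ⟨hX _ _ h hr1, x, hX _ _ h hx, by simp, ?_⟩
              refine Submodule.subset_span (Or.inr ⟨b, z, hzD, Or.inr (Or.inl ⟨by rwa [hb], ?_⟩)⟩)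
              refine Prod.ext ?_ ?_ <;> simp
            · refine ⟨hX _ _ h hr2, y, hX _ _ h hy, hsub hx0 hy0, ?_⟩
              refine Submodule.subset_span (Or.inr ⟨b, z, hzD, Or.inr (Or.inr ⟨by rwa [hb], ?_⟩)⟩)
              have : (⟨y - x, hsub hx0 hy0⟩ : A) = - z := by ext; simp [z]
              rw [this]
              refine Prod.ext ?_ ?_
              · simp
              · simp
  -- flags in the quotient
  let G : α → Submodule k (X.V ⧸ A) := fun s => (X.F s).map A.mkQ
  obtain ⟨m, b, φ, hbφ, hG⟩ := two_flags C1 C2 _ (X.V ⧸ A) rfl G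
    (fun s hs t ht => (hc1 s hs t ht).imp (fun h => Submodule.map_mono (hX _ _ h))
      (fun h => Submodule.map_mono (hX _ _ h)))
    (fun s hs t ht => (hc2 s hs t ht).imp (fun h => Submodule.map_mono (hX _ _ h))
      (fun h => Submodule.map_mono (hX _ _ h)))
  choose x0 hx0 using fun j => A.mkQ_surjective (b j)
  choose x w r hxx hcr hE using fun j => hvec (x0 j)
  have hxb : ∀ j, A.mkQ (x j) = b j := by
    intro j
    rw [← hx0 j]
    exact (Submodule.Quotient.eq A).2 (hxx j)
  have hmem : ∀ j s, s ∈ C1 ∪ C2 → b j ∈ G s → r j ∈ X.F s ∧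
        ∃ l ∈ X.F s, ∃ hl : l - x j ∈ A, (⟨l - x j, hl⟩, 0) + w j ∈ US s := by
    rintro j s hs ⟨l, hl, hlb⟩
    refine hE j s hs ⟨l, hl, ?_⟩
    rw [← hx0 j] at hlb
    exact (Submodule.Quotient.eq A).1 hlb
  let π : X.V →ₗ[k] A := LinearMap.codRestrict A
    (LinearMap.id - ∑ j, (φ j ∘ₗ A.mkQ).smulRight (x j)) (by
      intro v
      refine (Submodule.Quotient.mk_eq_zero A).1 ?_
      change A.mkQ _ = 0
      simp only [LinearMap.sub_apply, LinearMap.id_apply, LinearMap.sum_apply,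
        LinearMap.smulRight_apply, map_sub, map_sum, map_smul, hxb, LinearMap.comp_apply, hbφ,
        sub_self])
  have hπ : ∀ v, (π v : X.V) = v - ∑ j, φ j (A.mkQ v) • x j := by
    intro v; simp [π, LinearMap.sum_apply]
  let s1 : X.V →ₗ[k] (A × (β → A)) :=
    LinearMap.inl k A (β → A) ∘ₗ π + ∑ j, (φ j ∘ₗ A.mkQ).smulRight (w j)
  have hs1 : ∀ v, s1 v = (π v, 0) + ∑ j, φ j (A.mkQ v) • w j := by
    intro v; simp [s1, LinearMap.sum_apply]
  have hs1A : ∀ v (hv : v ∈ A), s1 v = (⟨v, hv⟩, 0) := by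
    intro v hv
    have h0 : A.mkQ v = 0 := by simpa using hv
    rw [hs1]
    have : π v = ⟨v, hv⟩ := by ext; rw [hπ]; simp [h0]
    rw [this, h0]; simp
  have hbase : ∀ s, ∀ v ∈ X.F s, ∀ hv : v ∈ A, ((⟨v, hv⟩, 0) : A × (β → A)) ∈ US s := by
    intro s v hv hvA
    rcases hs s with rfl | ⟨b, hb⟩
    · exact Submodule.subset_span (Or.inl ⟨rfl, _, rfl⟩)
    · refine Submodule.subset_span (Or.inr ⟨b, ⟨v, hvA⟩, ?_, Or.inl ⟨hb, rfl⟩⟩)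
      change v ∈ X.F (e b).1 ⊔ X.F (e b).2
      rw [hb]; simpa using hv
  have hs1mor : ∀ s, ∀ v ∈ X.F s, s1 v ∈ US s := by
    intro s v hv
    by_cases hsN : le s a
    · have hvA : v ∈ A := hX _ _ hsN hv
      rw [hs1A v hvA]
      exact hbase s v hv hvA
    · have hsC := (hcov s).resolve_left hsN
      have hvG : A.mkQ v ∈ G s := ⟨v, hv, rfl⟩
      have hl : ∀ j, ∃ y ∈ X.F s, ∃ hy : y - φ j (A.mkQ v) • x j ∈ A,
          ((⟨y - φ j (A.mkQ v) • x j, hy⟩, 0) + φ j (A.mkQ v) • w j) ∈ US s := by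
        intro j
        by_cases h0 : φ j (A.mkQ v) = 0
        · refine ⟨0, zero_mem _, by rw [h0]; simp, ?_⟩
          have : ((⟨0 - φ j (A.mkQ v) • x j, by rw [h0]; simp⟩, 0) + φ j (A.mkQ v) • w j :
            A × (β → A)) = 0 := by
            refine Prod.ext ?_ ?_
            · ext
              simp only [h0, zero_smul, sub_zero, add_zero, Prod.fst_zero]
              rfl
            · simp only [h0, zero_smul, add_zero, Prod.snd_zero]
          rw [this]; exact zero_mem _
        · obtain ⟨_, l, hl, hlA, hU⟩ := hmem j s hsC (hG s hsC _ hvG j h0)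
          refine ⟨φ j (A.mkQ v) • l, Submodule.smul_mem _ _ hl, ?_, ?_⟩
          · rw [← smul_sub]; exact Submodule.smul_mem _ _ hlA
          · have := Submodule.smul_mem _ (φ j (A.mkQ v)) hU
            convert this using 1
            rw [smul_add]
            congr 1
            refine Prod.ext ?_ ?_
            · ext; simp [smul_sub]
            · simp
      choose y hy hyA hyU using hl
      have hrest : v - ∑ j, y j ∈ X.F s := sub_mem hv (sum_mem fun j _ => hy j)
      have heq : v - ∑ j, y j = (π v : X.V) - ∑ j, (y j - φ j (A.mkQ v) • x j) := by
        rw [hπ, Finset.sum_sub_distrib]; abel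
      have hrestA : v - ∑ j, y j ∈ A := by
        rw [heq]
        exact sub_mem (π v).2 (sum_mem fun j _ => hyA j)
      have hfin : s1 v = (⟨v - ∑ j, y j, hrestA⟩, 0) +
          ∑ j, ((⟨y j - φ j (A.mkQ v) • x j, hyA j⟩, 0) + φ j (A.mkQ v) • w j) := by
        rw [hs1, Finset.sum_add_distrib, ← add_assoc]
        congr 1
        refine Prod.ext ?_ ?_
        · ext
          simp only [Prod.fst_add, Prod.fst_sum, Submodule.coe_add, heq,
            AddSubmonoidClass.coe_finsetSum]
          abel
        · simp [Prod.snd_sum]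
      rw [hfin]
      exact add_mem (hbase s _ hrest hrestA) (sum_mem fun j _ => hyU j)
  have hsum : (LinearMap.id : X.V →ₗ[k] X.V) =
      c ∘ₗ s1 + ∑ j, (φ j ∘ₗ A.mkQ).smulRight (r j) := by
    ext v
    have hc0 : ∀ y : A, c (y, 0) = y := by intro y; rw [hcv]; simp
    simp only [LinearMap.id_apply, LinearMap.add_apply, LinearMap.comp_apply, LinearMap.sum_apply,
      LinearMap.smulRight_apply]
    rw [hs1, map_add, hc0, map_sum, add_assoc, ← Finset.sum_add_distrib]
    simp only [map_smul, ← smul_add, hcr, hπ]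
    abel
  rw [hsum]
  refine add_mem ?_ (sum_mem fun j _ => ?_)
  · let Φ : (A →ₗ[k] A) →+ (X.V →ₗ[k] X.V) :=
      { toFun := fun h => c ∘ₗ integMap h ∘ₗ s1
        map_zero' := by ext v; simp [integMap, hcv]
        map_add' := by
          intro h h'
          ext v
          simp only [LinearMap.comp_apply, LinearMap.add_apply, ← map_add]
          congr 1 }
    have h1 : c ∘ₗ s1 = Φ LinearMap.id := by
      ext v; rfl
    rw [h1]
    have h2 : ∀ h ∈ AddSubmonoid.closure (FacSet M D), Φ h ∈ AddSubmonoid.closure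
        (FacSet (Sum.elim (fun i => integRep le a e (M i)) (fun E => oneRep E)) X) := by
      intro h hh
      induction hh using AddSubmonoid.closure_induction with
      | mem h hh =>
        obtain ⟨i, f, g, hf, hg, rfl⟩ := hh
        refine AddSubmonoid.subset_closure ⟨Sum.inl i, integMap f ∘ₗ s1, c ∘ₗ integMap g, ?_, ?_, ?_⟩
        · intro p v hv
          exact integMap_mor le a e hf p (s1 v) (hs1mor p v hv)
        · intro p v hv
          exact hc p (integMap_mor le a e hg p v hv)
        · rfl
      | zero => change Φ (0 : A →ₗ[k] A) ∈ _; rw [map_zero]; exact zero_mem _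
      | add x y _ _ hx hy =>
        exact Set.mem_of_eq_of_mem (Φ.map_add x y) (add_mem hx hy)
    exact h2 _ hid
  · let E : Set α := {s | s ∈ C1 ∪ C2 ∧ b j ∈ G s}
    refine AddSubmonoid.subset_closure ⟨Sum.inr (E ∪ {s | ∃ v ∈ X.F s, φ j (A.mkQ v) ≠ 0}),
      (ULift.moduleEquiv : ULift.{u} k ≃ₗ[k] k).symm.toLinearMap ∘ₗ (φ j ∘ₗ A.mkQ),
      LinearMap.toSpanSingleton k X.V (r j) ∘ₗ
        (ULift.moduleEquiv : ULift.{u} k ≃ₗ[k] k).toLinearMap, ?_, ?_, ?_⟩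
    · intro p v hv
      simp only [Sum.elim_inr, oneRep]
      split_ifs with h
      · trivial
      · by_cases h0 : φ j (A.mkQ v) = 0
        · change (ULift.moduleEquiv : ULift.{u} k ≃ₗ[k] k).symm (φ j (A.mkQ v)) ∈
            (⊥ : Submodule k (ULift.{u} k))
          rw [h0, map_zero]; exact zero_mem _
        · exact absurd (Or.inr ⟨v, hv, h0⟩) h
    · intro p v hv
      simp only [Sum.elim_inr, oneRep] at hv
      split_ifs at hv with h
      · have hrp : r j ∈ X.F p := by
          rcases h with h | ⟨v, hv, hv0⟩
          · exact (hmem j p h.1 h.2).1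
          · have hpN : ¬ le p a := by
              intro hle
              apply hv0
              have : A.mkQ v = 0 := by simpa using hX _ _ hle hv
              rw [this, map_zero]
            have hpC := (hcov p).resolve_left hpN
            exact (hmem j p hpC (hG p hpC _ ⟨v, hv, rfl⟩ j hv0)).1
        exact Submodule.smul_mem _ _ hrp
      · have : v = 0 := hv
        rw [this, map_zero]; exact zero_mem _
    · rfl
end Step

/-- Order encoded by bit masks. -/
def bLe (L : List ℕ) (i j : ℕ) : Bool := Nat.testBit (L.getD j 0) i

/-- One derivation step of a finite poset. -/
structure DStep where
  a : ℕ
  c1 : ℕ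
  c2 : ℕ
  e : List ℕ
  L : List ℕ

/-- First component of the `b`th new point. -/
def DStep.p1 (d : DStep) (b : ℕ) : ℕ := d.e.getD b 0 % 32

/-- Second component of the `b`th new point. -/
def DStep.p2 (d : DStep) (b : ℕ) : ℕ := d.e.getD b 0 / 32

/-- Check for all numbers below `m`. -/
def allB (m : ℕ) (p : ℕ → Bool) : Bool := (List.range m).all p

/-- Check for some number below `m`. -/
def anyB (m : ℕ) (p : ℕ → Bool) : Bool := (List.range m).any p

theorem allB_iff {m : ℕ} {p : ℕ → Bool} : allB m p = true ↔ ∀ i < m, p i = true := by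
  simp [allB]

theorem anyB_iff {m : ℕ} {p : ℕ → Bool} : anyB m p = true ↔ ∃ i < m, p i = true := by
  simp [anyB]

/-- Reflexivity and transitivity. -/
def posetOK (L : List ℕ) : Bool :=
  allB L.length (fun i => bLe L i i) && allB L.length (fun i => allB L.length (fun j =>
    !bLe L i j || allB L.length (fun l => !bLe L j l || bLe L i l)))

/-- Validity of a derivation step. -/
def DStep.ok (L : List ℕ) (d : DStep) : Bool :=
  decide (d.a < L.length) &&
  allB L.length (fun s => bLe L s d.a || (d.c1.testBit s || d.c2.testBit s)) &&
  allB L.length (fun s => !d.c1.testBit s || allB L.length (fun t => !d.c1.testBit t ||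
    (bLe L s t || bLe L t s))) &&
  allB L.length (fun s => !d.c2.testBit s || allB L.length (fun t => !d.c2.testBit t ||
    (bLe L s t || bLe L t s))) &&
  allB d.L.length (fun b => decide (d.p1 b < L.length) && decide (d.p2 b < L.length)) &&
  allB d.L.length (fun b => allB d.L.length (fun b' => !bLe d.L b b' ||
    ((bLe L (d.p1 b) (d.p1 b') || bLe L (d.p1 b) (d.p2 b')) &&
     (bLe L (d.p2 b) (d.p1 b') || bLe L (d.p2 b) (d.p2 b'))))) &&
  allB L.length (fun s => decide (s = d.a) ||
    anyB d.L.length (fun b => decide (d.p1 b = s) && decide (d.p2 b = s))) &&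
  allB L.length (fun p => !d.c1.testBit p || allB L.length (fun q => !d.c2.testBit q ||
    (bLe L p q || (bLe L q p || anyB d.L.length (fun b =>
      decide (d.p1 b = p) && decide (d.p2 b = q))))))

/-- Validity of a list of derivation steps. -/
def certOK : List ℕ → List DStep → Bool
  | L, [] => decide (L.length = 0)
  | L, d :: ds => posetOK L && (d.ok L && certOK d.L ds)

theorem certOK.sound {k : Type} [Field k] : ∀ (ds : List DStep) (L : List ℕ), certOK L ds = true →
    FT.{u} k (Fin L.length) (fun i j => bLe L i j = true) := by
  intro ds
  induction ds with
  | nil =>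
    intro L h
    simp only [certOK, decide_eq_true_eq] at h
    have : IsEmpty (Fin L.length) := by rw [h]; infer_instance
    exact FT.empty (α := Fin L.length) _
  | cons d ds ih =>
    intro L h
    simp only [certOK, Bool.and_eq_true] at h
    obtain ⟨h1, h2, h3⟩ := h
    have IH := ih _ h3
    simp only [posetOK, DStep.ok, Bool.and_eq_true, allB_iff, anyB_iff, Bool.or_eq_true,
      decide_eq_true_eq, Bool.not_eq_true', Bool.eq_false_iff, ne_eq, ← imp_iff_not_or] at h1 h2
    obtain ⟨hr, ht⟩ := h1
    obtain ⟨⟨⟨⟨⟨⟨⟨ha, hcov⟩, hc1⟩, hc2⟩, hlt⟩, hle⟩, hs⟩, hp⟩ := h2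
    refine FT.step (α := Fin L.length) (β := Fin d.L.length) (fun i => hr i i.2) ⟨d.a, ha⟩ {s | d.c1.testBit s = true}
      {s | d.c2.testBit s = true} (fun s => hcov s s.2) (fun s hs t ht => hc1 s s.2 hs t t.2 ht)
      (fun s hs t ht => hc2 s s.2 hs t t.2 ht)
      (fun b => (⟨d.p1 b, (hlt b b.2).1⟩, ⟨d.p2 b, (hlt b b.2).2⟩))
      (fun b b' hb => hle b b.2 b' b'.2 hb) ?_ ?_
      (fun i j l hij hjl => ht i i.2 j j.2 hij l l.2 hjl) IH
    · intro s
      rcases hs s s.2 with h | ⟨b, hb, h1, h2⟩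
      · exact Or.inl (Fin.ext h)
      · exact Or.inr ⟨⟨b, hb⟩, Prod.ext (Fin.ext h1) (Fin.ext h2)⟩
    · intro p hp1 q hq
      rcases hp p p.2 hp1 q q.2 hq with h | h | ⟨b, hb, h1, h2⟩
      · exact Or.inl h
      · exact Or.inr (Or.inl h)
      · exact Or.inr (Or.inr ⟨⟨b, hb⟩, Prod.ext (Fin.ext h1) (Fin.ext h2)⟩)

/-- The grid poset `[3] × [5]`, each point given by the bit mask of the points below it. -/
def gridList : List ℕ := [31, 30, 28, 24, 16, 1023, 990, 924, 792, 528, 32767, 31710, 29596, 25368, 16912]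

/-- The successive derivations, ending in the empty poset. -/
def gridCert : List DStep := [
  ⟨10, 0, 0,
    [0, 33, 66, 99, 132, 165, 198, 231, 264, 297, 363, 396, 429, 462],
    [31, 30, 28, 24, 16, 1023, 990, 924, 792, 528, 16350, 15260, 13080, 8720]⟩,
  ⟨10, 33, 0,
    [0, 33, 66, 99, 132, 165, 198, 231, 264, 297, 363, 396, 429],
    [31, 30, 28, 24, 16, 1023, 990, 924, 792, 528, 8092, 6936, 4624]⟩,
  ⟨5, 7168, 0,
    [0, 33, 66, 99, 132, 198, 231, 264, 297, 330, 363, 396],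
    [31, 30, 28, 24, 16, 510, 476, 408, 272, 4060, 3480, 2320]⟩,
  ⟨9, 3, 32,
    [0, 33, 66, 99, 132, 165, 198, 231, 264, 330, 363, 160],
    [31, 30, 28, 24, 16, 510, 476, 408, 272, 1944, 1296, 2559]⟩,
  ⟨11, 1536, 0,
    [0, 33, 66, 99, 132, 165, 198, 231, 264, 297, 330],
    [31, 30, 28, 24, 16, 510, 476, 408, 272, 1944, 1296]⟩,
  ⟨5, 1, 1536,
    [0, 33, 66, 99, 132, 198, 231, 264, 297, 330, 288, 320],
    [31, 30, 28, 24, 16, 252, 216, 144, 984, 656, 4063, 2719]⟩,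
  ⟨10, 32, 0,
    [0, 33, 66, 99, 132, 165, 198, 231, 264, 297, 363],
    [31, 30, 28, 24, 16, 252, 216, 144, 984, 656, 1695]⟩,
  ⟨10, 96, 256,
    [0, 33, 66, 99, 132, 165, 198, 231, 264, 297, 261],
    [31, 30, 28, 24, 16, 252, 216, 144, 984, 656, 2044]⟩,
  ⟨10, 3, 0,
    [0, 33, 66, 99, 132, 165, 198, 231, 264, 297],
    [31, 30, 28, 24, 16, 252, 216, 144, 984, 656]⟩,
  ⟨5, 3, 768,
    [0, 33, 66, 99, 132, 198, 231, 264, 297, 256, 288, 257, 289],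
    [31, 30, 28, 24, 16, 120, 80, 504, 336, 8191, 5471, 6654, 4446]⟩,
  ⟨9, 0, 0,
    [0, 33, 66, 99, 132, 165, 198, 231, 264, 330, 363, 396],
    [31, 30, 28, 24, 16, 120, 80, 504, 336, 2911, 3582, 2398]⟩,
  ⟨10, 513, 0,
    [0, 33, 66, 99, 132, 165, 198, 231, 264, 297, 363],
    [31, 30, 28, 24, 16, 120, 80, 504, 336, 1887, 1374]⟩,
  ⟨9, 160, 0,
    [0, 33, 66, 99, 132, 165, 198, 231, 264, 330],
    [31, 30, 28, 24, 16, 120, 80, 504, 336, 862]⟩,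
  ⟨9, 1, 160,
    [0, 33, 66, 99, 132, 165, 198, 231, 264, 160, 224],
    [31, 30, 28, 24, 16, 120, 80, 504, 336, 639, 2047]⟩,
  ⟨10, 0, 0,
    [0, 33, 66, 99, 132, 165, 198, 231, 264, 297],
    [31, 30, 28, 24, 16, 120, 80, 504, 336, 639]⟩,
  ⟨9, 384, 0,
    [0, 33, 66, 99, 132, 165, 198, 231, 264],
    [31, 30, 28, 24, 16, 120, 80, 504, 336]⟩,
  ⟨7, 7, 0,
    [0, 33, 66, 99, 132, 165, 198, 264],
    [31, 30, 28, 24, 16, 120, 80, 208]⟩,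
  ⟨0, 96, 128,
    [33, 66, 99, 132, 165, 198, 231, 229],
    [15, 14, 12, 8, 60, 40, 104, 252]⟩,
  ⟨7, 3, 0,
    [0, 33, 66, 99, 132, 165, 198],
    [15, 14, 12, 8, 60, 40, 104]⟩,
  ⟨0, 48, 64,
    [33, 66, 99, 132, 165, 198, 196],
    [7, 6, 4, 30, 20, 52, 126]⟩,
  ⟨6, 1, 0,
    [0, 33, 66, 99, 132, 165],
    [7, 6, 4, 30, 20, 52]⟩,
  ⟨3, 1, 32,
    [0, 33, 66, 132, 165, 160],
    [7, 6, 4, 12, 28, 63]⟩,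
  ⟨5, 0, 0,
    [0, 33, 66, 99, 132],
    [7, 6, 4, 12, 28]⟩,
  ⟨0, 24, 0,
    [33, 66, 99, 132],
    [3, 2, 6, 14]⟩,
  ⟨3, 1, 0,
    [0, 33, 66],
    [3, 2, 6]⟩,
  ⟨0, 4, 0,
    [33, 66],
    [1, 3]⟩,
  ⟨1, 0, 0,
    [0],
    [1]⟩,
  ⟨0, 0, 0,
    [],
    []⟩]

theorem gridCert_ok : certOK gridList gridCert = true := by decide +kernel

theorem gridList_le : ∀ c c' : Fin 3, ∀ j j' : Fin 5,
    (c ≤ c' ∧ j' ≤ j) ↔ bLe gridList (5 * c.1 + j.1) (5 * c'.1 + j'.1) = true := by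
  decide +kernel

/-- Order on the grid. -/
def gridLe (n : ℕ) (a b : Fin 3 × Fin n) : Prop := a.1 ≤ b.1 ∧ b.2 ≤ a.2

theorem gridLe_refl (n : ℕ) (a : Fin 3 × Fin n) : gridLe n a a := ⟨le_rfl, le_rfl⟩

theorem gridLe_trans (n : ℕ) (a b c : Fin 3 × Fin n) (h : gridLe n a b) (h' : gridLe n b c) :
    gridLe n a c := ⟨h.1.trans h'.1, h'.2.trans h.2⟩

theorem FT_grid (k : Type) [Field k] (n : ℕ) (hn : n ≤ 5) :
    FT.{u} k (Fin 3 × Fin n) (gridLe n) := by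
  have h0 := certOK.sound.{u} (k := k) gridCert gridList gridCert_ok
  have hl : gridList.length = 15 := rfl
  refine FT.restrict (β := Fin gridList.length)
    (fun a => ⟨5 * a.1.1 + a.2.1, by have := a.1.2; have := a.2.2; omega⟩) ?_
    (gridLe_refl n) ?_ h0
  · rintro ⟨c, j⟩ ⟨c', j'⟩
    exact gridList_le c c' (Fin.castLE hn j) (Fin.castLE hn j')
  · have h1 : posetOK gridList = true := by decide +kernel
    simp only [posetOK, Bool.and_eq_true, allB_iff, Bool.or_eq_true,
      Bool.not_eq_true', Bool.eq_false_iff, ne_eq, ← imp_iff_not_or] at h1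
    exact fun i j l hij hjl => h1.2 i i.2 j j.2 hij l l.2 hjl


section Elementary
variable {k : Type} [Field k] {n : ℕ}

/-- Elementary matrices in the lower triangular algebra (zero above the diagonal). -/
def eLT (i j : Fin n) : lowerTriangularAlg k n :=
  ⟨if j ≤ i then Matrix.single i j 1 else 0, by
    intro a b hab
    split_ifs with h
    · rw [Matrix.single_apply_of_ne]
      rintro ⟨rfl, rfl⟩
      exact absurd h (not_le.2 hab)
    · rfl⟩

theorem eLT_apply (i j a b : Fin n) : (eLT (k := k) i j : Matrix (Fin n) (Fin n) k) a b =
    if j ≤ i ∧ i = a ∧ j = b then 1 else 0 := by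
  simp only [eLT]
  by_cases h : j ≤ i
  · simp only [h, if_true, true_and, Matrix.single_apply]
  · simp only [h, if_false, false_and, Matrix.zero_apply]

theorem eLT_mul {i j l : Fin n} (h : j ≤ i) (h' : l ≤ j) :
    eLT (k := k) i j * eLT j l = eLT i l := by
  apply Subtype.ext
  simp [eLT, h, h', h'.trans h]

theorem eLT_sum : ∑ j, eLT (k := k) (n := n) j j = 1 := by
  apply Subtype.ext
  ext a b
  simp only [AddSubmonoidClass.coe_finsetSum, Matrix.sum_apply, eLT_apply, OneMemClass.coe_one,
    Matrix.one_apply, le_refl, true_and]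
  by_cases hab : a = b
  · subst hab; simp
  · rw [if_neg hab]
    exact Finset.sum_eq_zero fun i _ => if_neg fun h => hab (h.1.symm.trans h.2)

theorem mul_eLT (A : lowerTriangularAlg k n) (j : Fin n) :
    A * eLT j j = ∑ i, (A : Matrix (Fin n) (Fin n) k) i j • eLT i j := by
  apply Subtype.ext
  ext a b
  simp only [AddSubmonoidClass.coe_finsetSum, Matrix.sum_apply, MulMemClass.coe_mul,
    Matrix.mul_apply, SetLike.val_smul, Matrix.smul_apply, eLT_apply, smul_eq_mul, mul_ite, mul_one,
    mul_zero, le_refl, true_and]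
  rw [Finset.sum_eq_single j (by intro c _ hc; exact if_neg fun h => hc h.1.symm) (by simp),
    Finset.sum_eq_single a (by intro c _ hc; exact if_neg fun h => hc h.2.1) (by simp)]
  simp only [true_and]
  by_cases hab : j ≤ a
  · simp [hab]
  · simp [hab, A.2 a j (not_le.1 hab)]

theorem eLT_mul' (A : lowerTriangularAlg k n) (i : Fin n) :
    eLT i i * A = ∑ j, (A : Matrix (Fin n) (Fin n) k) i j • eLT i j := by
  apply Subtype.ext
  ext a b
  simp only [AddSubmonoidClass.coe_finsetSum, Matrix.sum_apply, MulMemClass.coe_mul,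
    Matrix.mul_apply, SetLike.val_smul, Matrix.smul_apply, eLT_apply, smul_eq_mul, mul_ite, mul_one,
    mul_zero, le_refl, true_and, ite_mul, one_mul, zero_mul]
  rw [Finset.sum_eq_single i (by intro c _ hc; exact if_neg fun h => hc h.2.symm) (by simp),
    Finset.sum_eq_single b (by intro c _ hc; exact if_neg fun h => hc h.2.2) (by simp)]
  by_cases hab : b ≤ i
  · by_cases hi : i = a
    · subst hi; simp [hab]
    · simp [hi]
  · simp [hab, A.2 i b (not_le.1 hab)]

end Elementary

section Pairs

/-- A finitely generated module with a submodule. -/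
structure Pr (R : Type) [Ring R] where
  V : Type u
  [grp : AddCommGroup V]
  [mod : Module R V]
  [fin : Module.Finite R V]
  U : Submodule R V

attribute [instance] Pr.grp Pr.mod Pr.fin

/-- Morphisms of pairs. -/
def PrMor {R : Type} [Ring R] (X Y : Pr.{u} R) (f : X.V →ₗ[R] Y.V) : Prop := ∀ x ∈ X.U, f x ∈ Y.U

theorem PrMor.comp {R : Type} [Ring R] {X Y Z : Pr.{u} R} {f : X.V →ₗ[R] Y.V} {g : Y.V →ₗ[R] Z.V}
    (hg : PrMor Y Z g) (hf : PrMor X Y f) : PrMor X Z (g ∘ₗ f) := fun x hx => hg _ (hf x hx)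

/-- Endomorphisms factoring through a member of `S`. -/
def PFac {R : Type} [Ring R] (S : Set (Pr.{u} R)) (X : Pr.{u} R) : Set (X.V →ₗ[R] X.V) :=
  {h | ∃ Z ∈ S, ∃ f g, PrMor X Z f ∧ PrMor Z X g ∧ h = g ∘ₗ f}

end Pairs

/-- The opposite of the algebra of lower triangular matrices. -/
def OpLT (k : Type) [Field k] (n : ℕ) : Type := (lowerTriangularAlg k n)ᵐᵒᵖ

instance (k : Type) [Field k] (n : ℕ) : Ring (OpLT k n) :=
  inferInstanceAs (Ring (lowerTriangularAlg k n)ᵐᵒᵖ)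

instance (k : Type) [Field k] (n : ℕ) : Algebra k (OpLT k n) :=
  inferInstanceAs (Algebra k (lowerTriangularAlg k n)ᵐᵒᵖ)

instance (k : Type) [Field k] (n : ℕ) : Module.Finite k (OpLT k n) :=
  inferInstanceAs (Module.Finite k (lowerTriangularAlg k n)ᵐᵒᵖ)

section OpLT
variable {k : Type} [Field k] {n : ℕ}
/-- The underlying matrix. -/
def OpLT.un (A : OpLT k n) : lowerTriangularAlg k n := MulOpposite.unop A
/-- The element given by a matrix. -/
def OpLT.mk (A : lowerTriangularAlg k n) : OpLT k n := MulOpposite.op A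

theorem OpLT.un_mk (A : lowerTriangularAlg k n) : (OpLT.mk A).un = A := rfl
theorem OpLT.mk_un (A : OpLT k n) : OpLT.mk A.un = A := rfl
theorem OpLT.mk_mul (A B : lowerTriangularAlg k n) :
    OpLT.mk A * OpLT.mk B = OpLT.mk (B * A) := rfl
theorem OpLT.mk_sum {ι : Type} (s : Finset ι) (f : ι → lowerTriangularAlg k n) :
    OpLT.mk (∑ i ∈ s, f i) = ∑ i ∈ s, OpLT.mk (f i) :=
  map_sum (MulOpposite.opAddEquiv : lowerTriangularAlg k n ≃+ (lowerTriangularAlg k n)ᵐᵒᵖ) f s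
theorem OpLT.mk_smul (c : k) (A : lowerTriangularAlg k n) : OpLT.mk (c • A) = c • OpLT.mk A := rfl
theorem OpLT.mk_one : OpLT.mk (1 : lowerTriangularAlg k n) = 1 := rfl
theorem OpLT.mk_zero : OpLT.mk (0 : lowerTriangularAlg k n) = 0 := rfl
theorem OpLT.un_mul (A B : OpLT k n) : (A * B).un = B.un * A.un := rfl
theorem OpLT.un_add (A B : OpLT k n) : (A + B).un = A.un + B.un := rfl
theorem OpLT.un_one : (1 : OpLT k n).un = 1 := rfl
theorem OpLT.un_zero : (0 : OpLT k n).un = 0 := rfl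
theorem OpLT.un_smul (c : k) (A : OpLT k n) : (c • A).un = c • A.un := rfl
end OpLT

section Row
variable {k : Type} [Field k] {n : ℕ}

/-- Row vectors with entries in `W`. -/
def RowMod (n : ℕ) (W : Type u) : Type u := Fin n → W

variable {W W' : Type u} [AddCommGroup W] [Module k W] [AddCommGroup W'] [Module k W']

instance : AddCommGroup (RowMod n W) := inferInstanceAs (AddCommGroup (Fin n → W))
instance : Module k (RowMod n W) := inferInstanceAs (Module k (Fin n → W))
instance [Module.Finite k W] : Module.Finite k (RowMod n W) :=
  inferInstanceAs (Module.Finite k (Fin n → W))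

/-- Entries. -/
def RowMod.mk (f : Fin n → W) : RowMod n W := f
/-- Entries. -/
def RowMod.get (f : RowMod n W) (j : Fin n) : W := f j

theorem RowMod.ext {f g : RowMod n W} (h : ∀ j, f.get j = g.get j) : f = g := funext h
theorem RowMod.get_mk (f : Fin n → W) (j : Fin n) : (RowMod.mk f).get j = f j := rfl
theorem RowMod.get_add (f g : RowMod n W) (j : Fin n) : (f + g).get j = f.get j + g.get j := rfl
theorem RowMod.get_sub (f g : RowMod n W) (j : Fin n) : (f - g).get j = f.get j - g.get j := rfl
theorem RowMod.get_zero (j : Fin n) : (0 : RowMod n W).get j = 0 := rfl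
theorem RowMod.get_ksmul (c : k) (f : RowMod n W) (j : Fin n) : (c • f).get j = c • f.get j := rfl

instance : SMul (OpLT k n) (RowMod n W) :=
  ⟨fun A f => RowMod.mk fun j => ∑ i, (A.un : Matrix (Fin n) (Fin n) k) i j • f.get i⟩

theorem RowMod.get_smul (A : (OpLT k n)) (f : RowMod n W) (j : Fin n) :
    (A • f).get j = ∑ i, (A.un : Matrix (Fin n) (Fin n) k) i j • f.get i := rfl

instance : Module (OpLT k n) (RowMod n W) where
  one_smul f := by
    apply RowMod.ext; intro j
    simp [RowMod.get_smul, OpLT.un_one, OpLT.un_zero, OpLT.un_add, OpLT.un_smul, Matrix.one_apply]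
  mul_smul A B f := by
    apply RowMod.ext; intro j
    simp only [RowMod.get_smul, OpLT.un_mul, MulMemClass.coe_mul, Matrix.mul_apply,
      Finset.smul_sum, Finset.sum_smul]
    rw [Finset.sum_comm]
    simp only [smul_smul, mul_comm]
  smul_zero A := by
    apply RowMod.ext; intro j
    simp [RowMod.get_smul, OpLT.un_one, OpLT.un_zero, OpLT.un_add, OpLT.un_smul, RowMod.get_zero]
  smul_add A f g := by
    apply RowMod.ext; intro j
    simp [RowMod.get_smul, OpLT.un_one, OpLT.un_zero, OpLT.un_add, OpLT.un_smul, RowMod.get_add, Finset.sum_add_distrib]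
  add_smul A B f := by
    apply RowMod.ext; intro j
    simp [RowMod.get_smul, OpLT.un_one, OpLT.un_zero, OpLT.un_add, OpLT.un_smul, RowMod.get_add, Finset.sum_add_distrib, add_smul]
  zero_smul f := by
    apply RowMod.ext; intro j
    simp [RowMod.get_smul, OpLT.un_one, OpLT.un_zero, OpLT.un_add, OpLT.un_smul, RowMod.get_zero]

instance : IsScalarTower k (OpLT k n) (RowMod n W) := ⟨by
  intro c A f
  apply RowMod.ext; intro j
  simp [RowMod.get_smul, OpLT.un_one, OpLT.un_zero, OpLT.un_add, OpLT.un_smul, RowMod.get_ksmul, Finset.smul_sum, smul_smul]⟩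

instance [Module.Finite k W] : Module.Finite (OpLT k n) (RowMod n W) :=
  Module.Finite.of_restrictScalars_finite k _ _

/-- Functoriality of row modules. -/
def RowMod.map (f : W →ₗ[k] W') : RowMod n W →ₗ[(OpLT k n)] RowMod n W' where
  toFun m := RowMod.mk fun j => f (m.get j)
  map_add' a b := by apply RowMod.ext; intro j; simp [RowMod.get_mk, RowMod.get_add]
  map_smul' A b := by apply RowMod.ext; intro j; simp [RowMod.get_mk, RowMod.get_smul]

theorem RowMod.get_map (f : W →ₗ[k] W') (m : RowMod n W) (j : Fin n) :
    (RowMod.map f m).get j = f (m.get j) := rfl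

instance : IsNoetherianRing (OpLT k n) :=
  isNoetherian_of_tower k (inferInstance : IsNoetherian k (OpLT k n))

instance : IsArtinianRing (OpLT k n) :=
  isArtinian_of_tower k (inferInstance : IsArtinian k (OpLT k n))

/-- Submodule of the row module given by a level of a representation of the grid. -/
def rowSub (M : PRep.{u} k (Fin 3 × Fin n)) (hM : PMono (gridLe n) M) (c : Fin 3) :
    Submodule (OpLT k n) (RowMod n M.V) where
  carrier := {f | ∀ j, f.get j ∈ M.F (c, j)}
  add_mem' hf hg j := add_mem (hf j) (hg j)
  zero_mem' j := zero_mem _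
  smul_mem' A f hf j := by
    rw [RowMod.get_smul]
    refine sum_mem fun i _ => ?_
    by_cases h : j ≤ i
    · exact Submodule.smul_mem _ _ (hM (c, i) (c, j) ⟨le_rfl, h⟩ (hf i))
    · rw [A.un.2 i j (not_le.1 h), zero_smul]; exact zero_mem _

/-- The pair attached to a representation of the grid. -/
def gPair (M : PRep.{u} k (Fin 3 × Fin n)) (hM : PMono (gridLe n) M) :
    Pr.{u} (OpLT k n) where
  V := rowSub M hM 2 ⧸ (rowSub M hM 0).comap (rowSub M hM 2).subtype
  U := ((rowSub M hM 1).comap (rowSub M hM 2).subtype).map (Submodule.mkQ _)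

variable {M N : PRep.{u} k (Fin 3 × Fin n)}

theorem rowMap_mem (hM : PMono (gridLe n) M) (hN : PMono (gridLe n) N) {f : M.V →ₗ[k] N.V}
    (hf : PMor M N f) (c : Fin 3) {m : RowMod n M.V} (hm : m ∈ rowSub M hM c) :
    RowMod.map f m ∈ rowSub N hN c := fun j => hf (c, j) _ (hm j)

/-- Restriction of `RowMod.map`. -/
def rowRes (hM : PMono (gridLe n) M) (hN : PMono (gridLe n) N) (f : M.V →ₗ[k] N.V)
    (hf : PMor M N f) : rowSub M hM 2 →ₗ[(OpLT k n)] rowSub N hN 2 :=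
  (RowMod.map f).restrict fun _ hm => rowMap_mem hM hN hf 2 hm

/-- Functoriality of `gPair`. -/
def gMap (hM : PMono (gridLe n) M) (hN : PMono (gridLe n) N) (f : M.V →ₗ[k] N.V)
    (hf : PMor M N f) : (gPair M hM).V →ₗ[(OpLT k n)] (gPair N hN).V :=
  Submodule.mapQ _ _ (rowRes hM hN f hf) fun m hm => rowMap_mem hM hN hf 0 hm

theorem gMap_mk (hM : PMono (gridLe n) M) (hN : PMono (gridLe n) N) (f : M.V →ₗ[k] N.V)
    (hf : PMor M N f) (m : rowSub M hM 2) :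
    gMap hM hN f hf (Submodule.mkQ _ m) = Submodule.mkQ _ (rowRes hM hN f hf m) := rfl

theorem gMap_mor (hM : PMono (gridLe n) M) (hN : PMono (gridLe n) N) (f : M.V →ₗ[k] N.V)
    (hf : PMor M N f) : PrMor (gPair M hM) (gPair N hN) (gMap hM hN f hf) := by
  rintro _ ⟨m, hm, rfl⟩
  exact ⟨rowRes hM hN f hf m, rowMap_mem hM hN hf 1 hm, rfl⟩

end Row


section Transfer
variable {k : Type} [Field k] {n : ℕ} {V : Type u} [AddCommGroup V] [Module k V]
  [Module (OpLT k n) V] [IsScalarTower k (OpLT k n) V]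

variable (k) in
/-- The maps `τ_j`. -/
def tauMap (j : Fin n) : (Fin n → V) →ₗ[k] V where
  toFun w := ∑ i, OpLT.mk (k := k) (eLT i j) • w i
  map_add' a b := by simp [Finset.sum_add_distrib]
  map_smul' c a := by simp [Finset.smul_sum, smul_algebra_smul_comm]

theorem tauMap_apply (j : Fin n) (w : Fin n → V) :
    tauMap k j w = ∑ i, OpLT.mk (k := k) (eLT i j) • w i := rfl

theorem tauMap_single (j i : Fin n) (v : V) :
    tauMap k j (Pi.single i v) = OpLT.mk (k := k) (eLT i j) • v := by
  rw [tauMap_apply, Finset.sum_eq_single i]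
  · simp
  · intro b _ hb; rw [Pi.single_eq_of_ne hb, smul_zero]
  · simp

theorem tau_rowsum (j : Fin n) (c : Fin n → k) (x : Fin n → Fin n → V) :
    tauMap k j (∑ i, c i • x i) = ∑ i, c i • tauMap k j (x i) := by
  rw [map_sum]
  simp only [map_smul]

/-- Rows supported in degrees at least `j`. -/
def suppSub (k : Type) [Field k] {n : ℕ} (V : Type u) [AddCommGroup V] [Module k V] (j : Fin n) :
    Submodule k (Fin n → V) where
  carrier := {w | ∀ i < j, w i = 0}
  add_mem' ha hb i hi := by simp [ha i hi, hb i hi]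
  zero_mem' i _ := rfl
  smul_mem' c a ha i hi := by simp [ha i hi]

theorem eLT_of_lt {i j : Fin n} (h : i < j) : eLT (k := k) i j = 0 := by
  apply Subtype.ext
  simp [eLT, not_le.2 h]

theorem tauMap_tau {j j' : Fin n} (h : j' ≤ j) {w : Fin n → V} (hw : w ∈ suppSub k V j) :
    OpLT.mk (k := k) (eLT j j') • tauMap k j w = tauMap k j' w := by
  rw [tauMap_apply, tauMap_apply, Finset.smul_sum]
  refine Finset.sum_congr rfl fun i _ => ?_
  by_cases hi : j ≤ i
  · rw [smul_smul, OpLT.mk_mul, eLT_mul hi h]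
  · rw [hw i (not_le.1 hi)]; simp

/-- The restriction of scalars of a submodule. -/
def kSub (U : Submodule (OpLT k n) V) : Submodule k V := U.restrictScalars k

theorem suppSub_mono {j j' : Fin n} (h : j' ≤ j) : suppSub k V j ≤ suppSub k V j' :=
  fun _ hw i hi => hw i (hi.trans_le h)

/-- The grid representation attached to a pair. -/
def gridRep [Module.Finite k V] (U : Submodule (OpLT k n) V) : PRep.{u} k (Fin 3 × Fin n) where
  V := Fin n → V
  F := fun p => suppSub k V p.2 ⊓ (if p.1 = 0 then LinearMap.ker (tauMap k p.2) else
    if p.1 = 1 then (U.restrictScalars k).comap (tauMap k p.2) else ⊤)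

theorem gridRep_mono [Module.Finite k V] (U : Submodule (OpLT k n) V) :
    PMono (gridLe n) (gridRep U) := by
  rintro ⟨c, j⟩ ⟨c', j'⟩ ⟨hc, hj⟩ w ⟨hw, hw'⟩
  refine ⟨suppSub_mono hj hw, ?_⟩
  have key := tauMap_tau hj hw
  simp only at hw' hc hj ⊢
  by_cases h0 : c' = 0
  · have : c = 0 := by subst h0; exact le_antisymm hc (Fin.zero_le _)
    rw [if_pos h0]; rw [if_pos this] at hw'
    change tauMap k j w = 0 at hw'
    change tauMap k j' w = 0
    exact key.symm.trans ((congrArg _ hw').trans (smul_zero _))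
  · rw [if_neg h0]
    by_cases h1 : c' = 1
    · rw [if_pos h1]
      change tauMap k j' w ∈ U
      rw [← key]
      refine Submodule.smul_mem _ _ ?_
      by_cases h2 : c = 0
      · rw [if_pos h2] at hw'
        change tauMap k j w = 0 at hw'
        exact Set.mem_of_eq_of_mem hw' (zero_mem U)
      · have : c = 1 := by omega
        rw [if_neg h2, if_pos this] at hw'
        exact hw'
    · rw [if_neg h1]; trivial

theorem single_supp (j : Fin n) (v : V) : Pi.single j v ∈ suppSub k V j :=
  fun i hi => Pi.single_eq_of_ne (M := fun _ => V) (i := j) (i' := i) hi.ne v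

variable [Module.Finite k V] (U : Submodule (OpLT k n) V)

/-- The canonical row. -/
def sRow (v : V) : RowMod n (Fin n → V) := RowMod.mk fun j => Pi.single j v

theorem sRow_mem (v : V) : sRow v ∈ rowSub (gridRep U) (gridRep_mono U) 2 :=
  fun j => ⟨single_supp j v, trivial⟩

/-- The map `σ`. -/
def sigmaMap : V →ₗ[OpLT k n]
    (rowSub (gridRep U) (gridRep_mono U) 2 ⧸
      (rowSub (gridRep U) (gridRep_mono U) 0).comap (rowSub (gridRep U) (gridRep_mono U) 2).subtype)
    where
  toFun v := Submodule.mkQ _ ⟨sRow v, sRow_mem U v⟩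
  map_add' a b := by
    rw [← map_add]
    congr 1
    apply Subtype.ext
    apply RowMod.ext
    intro j
    exact Pi.single_add (f := fun _ => V) j a b
  map_smul' A v := by
    rw [RingHom.id_apply, ← map_smul, ← sub_eq_zero, ← map_sub, Submodule.mkQ_apply,
      Submodule.Quotient.mk_eq_zero]
    intro j
    refine ⟨?_, ?_⟩
    · intro i hi
      change (Pi.single j (A • v) : Fin n → V) i - (∑ i, (A.un : Matrix (Fin n) (Fin n) k) i j •
        (Pi.single i v : Fin n → V)) i = 0
      rw [Pi.single_eq_of_ne hi.ne, Finset.sum_apply, zero_sub, neg_eq_zero]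
      refine Finset.sum_eq_zero fun l _ => ?_
      by_cases hl : l = i
      · subst hl; rw [A.un.2 _ _ hi, zero_smul]; rfl
      · rw [Pi.smul_apply, Pi.single_eq_of_ne (Ne.symm hl), smul_zero]
    · change tauMap k j ((Pi.single j (A • v) : Fin n → V) -
        (∑ i, (A.un : Matrix (Fin n) (Fin n) k) i j • (Pi.single i v : Fin n → V))) = 0
      rw [map_sub, map_sum, tauMap_single, smul_smul, sub_eq_zero]
      conv_lhs => rw [← OpLT.mk_un A, OpLT.mk_mul, mul_eLT, OpLT.mk_sum, Finset.sum_smul]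
      refine Finset.sum_congr rfl fun i _ => ?_
      rw [map_smul, tauMap_single, OpLT.mk_smul, smul_assoc]

/-- The map `ρ` before passing to the quotient. -/
def rhoPre : rowSub (gridRep U) (gridRep_mono U) 2 →ₗ[OpLT k n] V where
  toFun m := ∑ j, tauMap k j (m.1.get j)
  map_add' a b := by
    rw [← Finset.sum_add_distrib]
    refine Finset.sum_congr rfl fun j _ => ?_
    exact map_add (tauMap k j) _ _
  map_smul' A m := by
    rw [RingHom.id_apply, Finset.smul_sum]
    have h1 : ∀ i, A • tauMap k i (m.1.get i) =
        ∑ j, (A.un : Matrix (Fin n) (Fin n) k) i j • tauMap k j (m.1.get i) := by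
      intro i
      have hs : m.1.get i ∈ suppSub k V i := (m.2 i).1
      rw [← tauMap_tau le_rfl hs, smul_smul]
      conv_lhs => rw [← OpLT.mk_un A, OpLT.mk_mul, eLT_mul', OpLT.mk_sum, Finset.sum_smul]
      refine Finset.sum_congr rfl fun j _ => ?_
      rw [OpLT.mk_smul, smul_assoc]
      by_cases hj : j ≤ i
      · rw [tauMap_tau hj hs]
      · rw [A.un.2 _ _ (not_le.1 hj), zero_smul, zero_smul]
    simp only [h1]
    rw [Finset.sum_comm]
    refine Finset.sum_congr rfl fun j _ => ?_
    change tauMap k j (∑ i, (A.un : Matrix (Fin n) (Fin n) k) i j • (m.1.get i : Fin n → V)) = _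
    exact tau_rowsum j _ _

/-- The map `ρ`. -/
def rhoMap : (rowSub (gridRep U) (gridRep_mono U) 2 ⧸
      (rowSub (gridRep U) (gridRep_mono U) 0).comap (rowSub (gridRep U) (gridRep_mono U) 2).subtype)
      →ₗ[OpLT k n] V :=
  Submodule.liftQ _ (rhoPre U) (by
    intro m hm
    rw [LinearMap.mem_ker]
    change ∑ j, tauMap k j (m.1.get j) = 0
    exact Finset.sum_eq_zero fun j _ => (hm j).2)

theorem rho_sigma (v : V) : rhoMap U (sigmaMap U v) = v := by
  change ∑ j, tauMap k j (Pi.single j v : Fin n → V) = v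
  simp only [tauMap_single]
  rw [← Finset.sum_smul, ← OpLT.mk_sum, eLT_sum, OpLT.mk_one, one_smul]

theorem sigma_mor [Module.Finite (OpLT k n) V] :
    PrMor ⟨V, U⟩ (gPair (gridRep U) (gridRep_mono U)) (sigmaMap U) := by
  intro v hv
  refine ⟨⟨sRow v, sRow_mem U v⟩, ?_, rfl⟩
  intro j
  refine ⟨single_supp j v, ?_⟩
  change tauMap k j (Pi.single j v : Fin n → V) ∈ U
  rw [tauMap_single]
  exact Submodule.smul_mem _ _ hv

theorem rho_mor [Module.Finite (OpLT k n) V] :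
    PrMor (gPair (gridRep U) (gridRep_mono U)) ⟨V, U⟩ (rhoMap U) := by
  rintro _ ⟨m, hm, rfl⟩
  change ∑ j, tauMap k j (m.1.get j) ∈ U
  exact sum_mem fun j _ => (hm j).2

theorem transfer_aux [Module.Finite (OpLT k n) V] {ι : Type} (M : ι → PRep.{u} k (Fin 3 × Fin n))
    (hM : ∀ i, PMono (gridLe n) (M i))
    (hid : (LinearMap.id : (gridRep U).V →ₗ[k] (gridRep U).V) ∈
      AddSubmonoid.closure (FacSet M (gridRep U))) :
    (LinearMap.id : V →ₗ[OpLT k n] V) ∈ AddSubmonoid.closure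
      (PFac (Set.range fun i => gPair (M i) (hM i)) (⟨V, U⟩ : Pr.{u} (OpLT k n))) := by
  have hX := gridRep_mono U
  have main : ∀ h ∈ AddSubmonoid.closure (FacSet M (gridRep U)),
      ∃ hh : PMor (gridRep U) (gridRep U) h, (rhoMap U ∘ₗ gMap hX hX h hh ∘ₗ sigmaMap U) ∈
        AddSubmonoid.closure
          (PFac (Set.range fun i => gPair (M i) (hM i)) (⟨V, U⟩ : Pr.{u} (OpLT k n))) := by
    intro h hh
    induction hh using AddSubmonoid.closure_induction with
    | mem h hh =>
      obtain ⟨i, f, g, hf, hg, rfl⟩ := hh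
      refine ⟨fun p x hx => hg p _ (hf p x hx), AddSubmonoid.subset_closure
        ⟨_, ⟨i, rfl⟩, gMap hX (hM i) f hf ∘ₗ sigmaMap U, rhoMap U ∘ₗ gMap (hM i) hX g hg,
        (gMap_mor hX (hM i) f hf).comp (sigma_mor U),
        (rho_mor U).comp (gMap_mor (hM i) hX g hg), ?_⟩⟩
      ext v
      rfl
    | zero =>
      refine ⟨fun p x _ => zero_mem _, ?_⟩
      refine Set.mem_of_eq_of_mem ?_ (AddSubmonoid.zero_mem _)
      ext v
      change ∑ j, tauMap k j (0 : Fin n → V) = 0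
      simp
    | add x y _ _ hx hy =>
      obtain ⟨hx1, hx2⟩ := hx
      obtain ⟨hy1, hy2⟩ := hy
      refine ⟨fun p v hv => add_mem (hx1 p v hv) (hy1 p v hv), ?_⟩
      convert add_mem hx2 hy2 using 1
      ext v
      change ∑ j, tauMap k j (x (Pi.single j v : Fin n → V) + y (Pi.single j v : Fin n → V)) =
        ∑ j, tauMap k j (x (Pi.single j v : Fin n → V)) +
        ∑ j, tauMap k j (y (Pi.single j v : Fin n → V))
      rw [← Finset.sum_add_distrib]
      exact Finset.sum_congr rfl fun j _ => map_add _ _ _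
  obtain ⟨h1, h2⟩ := main _ hid
  convert h2 using 1
  ext v
  exact (rho_sigma U v).symm

end Transfer

theorem transfer (k : Type) [Field k] (n : ℕ) (hn : n ≤ 5) :
    ∃ S : Set (Pr.{u} (OpLT k n)), S.Finite ∧ ∀ X : Pr.{u} (OpLT k n),
      (LinearMap.id : X.V →ₗ[OpLT k n] X.V) ∈ AddSubmonoid.closure (PFac S X) := by
  obtain ⟨ι, hι, M, hM, h⟩ := (FT_grid.{u} k n hn).mono (gridLe_refl n) (gridLe_trans n)
  refine ⟨Set.range fun i => gPair (M i) (hM i), Set.finite_range _, ?_⟩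
  intro X
  letI : Module k X.V := Module.compHom X.V (algebraMap k (OpLT k n))
  haveI : IsScalarTower k (OpLT k n) X.V := IsScalarTower.of_algebraMap_smul fun _ _ => rfl
  haveI : Module.Finite k X.V := Module.Finite.trans (OpLT k n) X.V
  exact transfer_aux X.U M hM (h _ (gridRep_mono X.U))


section Indec
variable {R : Type} [Ring R]

/-- Indecomposability of a pair, in terms of idempotents. -/
def PIndec (X : Pr.{u} R) : Prop :=
  Nontrivial X.V ∧ ∀ e : Module.End R X.V, PrMor X X e → e * e = e → e = 0 ∨ e = 1

theorem PrMor.one (X : Pr.{u} R) : PrMor X X (1 : Module.End R X.V) := fun _ hx => hx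

theorem PrMor.mul {X : Pr.{u} R} {f g : Module.End R X.V} (hf : PrMor X X f) (hg : PrMor X X g) :
    PrMor X X (f * g) := fun x hx => hf _ (hg x hx)

theorem PrMor.pow {X : Pr.{u} R} {f : Module.End R X.V} (hf : PrMor X X f) (m : ℕ) :
    PrMor X X (f ^ m) := by
  induction m with
  | zero => exact fun _ hx => hx
  | succ m ih => rw [pow_succ]; exact ih.mul hf

theorem PrMor.sub {X Y : Pr.{u} R} {f g : X.V →ₗ[R] Y.V} (hf : PrMor X Y f) (hg : PrMor X Y g) :
    PrMor X Y (f - g) := fun x hx => sub_mem (hf x hx) (hg x hx)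

theorem PrMor.add {X Y : Pr.{u} R} {f g : X.V →ₗ[R] Y.V} (hf : PrMor X Y f) (hg : PrMor X Y g) :
    PrMor X Y (f + g) := fun x hx => add_mem (hf x hx) (hg x hx)

variable [IsArtinianRing R] [IsNoetherianRing R]

/-- A bijective endomorphism of a pair is invertible. -/
theorem PrMor.inv {X : Pr.{u} R} {h : Module.End R X.V} (hh : PrMor X X h)
    (hi : Function.Injective h) : ∃ t : Module.End R X.V, PrMor X X t ∧ t * h = 1 := by
  have hb : Function.Bijective h := IsArtinian.bijective_of_injective_endomorphism h hi
  let t := (LinearEquiv.ofBijective h hb)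
  refine ⟨t.symm.toLinearMap, ?_, ?_⟩
  · have hUi : Function.Injective (h.restrict hh : Module.End R X.U) := by
      intro a b hab
      exact Subtype.ext (hi (congrArg Subtype.val hab))
    intro x hx
    obtain ⟨y, hy⟩ := (IsArtinian.bijective_of_injective_endomorphism _ hUi).2 ⟨x, hx⟩
    have hy' : t y = x := congrArg Subtype.val hy
    change t.symm x ∈ X.U
    rw [← hy', LinearEquiv.symm_apply_apply]
    exact y.2
  · ext v
    exact t.symm_apply_apply v

theorem PIndec.dichotomy {X : Pr.{u} R} (hX : PIndec X) {h : Module.End R X.V}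
    (hh : PrMor X X h) : IsNilpotent h ∨ Function.Injective h := by
  let hU : Module.End R X.U := h.restrict hh
  obtain ⟨m, hm1, hm2, hm0⟩ := (h.eventually_isCompl_ker_pow_range_pow.and
    (hU.eventually_isCompl_ker_pow_range_pow.and (Filter.eventually_gt_atTop 0))).exists
  let e := (LinearMap.ker (h ^ m)).projection _ hm1
  have hpow : ∀ u : X.U, ((hU ^ m) u : X.V) = (h ^ m) u := by
    intro u
    rw [show hU ^ m = _ from Module.End.pow_restrict m hh]
    rfl
  have he : PrMor X X e := by
    intro u hu
    have : (⟨u, hu⟩ : X.U) ∈ LinearMap.ker (hU ^ m) ⊔ LinearMap.range (hU ^ m) := by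
      rw [hm2.sup_eq_top]; trivial
    obtain ⟨a, ha, b, ⟨c, hc⟩, hab⟩ := Submodule.mem_sup.1 this
    have hab' : (a : X.V) + b = u := congrArg Subtype.val hab
    have ha' : (a : X.V) ∈ LinearMap.ker (h ^ m) := by
      rw [LinearMap.mem_ker, ← hpow, LinearMap.mem_ker.1 ha]; rfl
    have hb' : (b : X.V) ∈ LinearMap.range (h ^ m) := ⟨c, by rw [← hpow, hc]⟩
    rw [← hab', map_add]
    change (LinearMap.ker (h ^ m)).projection _ hm1 _ + (LinearMap.ker (h ^ m)).projection _ hm1 _ ∈ _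
    rw [Submodule.projection_apply_of_mem_left hm1 ha',
      Submodule.projection_apply_of_mem_right hm1 hb', add_zero]
    exact a.2
  have hee : e * e = e := by
    ext v
    exact Submodule.projection_apply_of_mem_left hm1 (Submodule.projection_apply_mem hm1 v)
  rcases hX.2 e he hee with h0 | h1
  · right
    have hk : LinearMap.ker (h ^ m) = ⊥ := by
      rw [eq_bot_iff]
      intro v hv
      have : e v = v := Submodule.projection_apply_of_mem_left hm1 hv
      rw [h0] at this
      exact this.symm
    intro a b hab
    have : Function.Injective (h ^ m) := LinearMap.ker_eq_bot.1 hk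
    apply this
    obtain ⟨m', rfl⟩ := Nat.exists_eq_succ_of_ne_zero hm0.ne'
    rw [pow_succ]
    exact congrArg (h ^ m') hab
  · left
    refine ⟨m, ?_⟩
    ext v
    have : e v ∈ LinearMap.ker (h ^ m) := Submodule.projection_apply_mem hm1 v
    rw [h1] at this
    exact this

/-- Some member of a generating set of the identity is invertible. -/
theorem PIndec.exists_inj {X : Pr.{u} R} (hX : PIndec X) {S : Set (Module.End R X.V)}
    (hS : ∀ s ∈ S, PrMor X X s) (hid : (1 : Module.End R X.V) ∈ AddSubmonoid.closure S) :
    ∃ s ∈ S, Function.Injective s := by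
  have := hX.1
  have main : ∀ h ∈ AddSubmonoid.closure S, PrMor X X h ∧
      ∀ w : Module.End R X.V, PrMor X X w → w * h = 1 → ∃ s ∈ S, Function.Injective s := by
    intro h hh
    induction hh using AddSubmonoid.closure_induction with
    | mem s hs =>
      refine ⟨hS s hs, fun w _ hws => ⟨s, hs, ?_⟩⟩
      intro a b hab
      have h1 : ∀ v, w (s v) = v := fun v => LinearMap.congr_fun hws v
      rw [← h1 a, hab, h1]
    | zero => exact ⟨fun _ _ => zero_mem _, fun w _ h0 => by
        rw [mul_zero] at h0; exact absurd h0 zero_ne_one⟩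
    | add x y _ _ hx hy =>
      refine ⟨hx.1.add hy.1, fun w hw hwxy => ?_⟩
      rw [mul_add] at hwxy
      rcases hX.dichotomy (hw.mul hx.1) with h1 | h1
      · rcases hX.dichotomy (hw.mul hy.1) with h2 | h2
        · have hc : Commute (w * x) (w * y) := by
            rw [← eq_sub_iff_add_eq'] at hwxy
            rw [hwxy]
            exact (Commute.one_right _).sub_right (Commute.refl _)
          have := hc.isNilpotent_add h1 h2
          rw [hwxy] at this
          exact absurd this not_isNilpotent_one
        · obtain ⟨t, ht, ht1⟩ := (hw.mul hy.1).inv h2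
          exact hy.2 (t * w) (ht.mul hw) (by rw [mul_assoc]; exact ht1)
      · obtain ⟨t, ht, ht1⟩ := (hw.mul hx.1).inv h1
        exact hx.2 (t * w) (ht.mul hw) (by rw [mul_assoc]; exact ht1)
  exact (main _ hid).2 1 (PrMor.one X) (one_mul _)

theorem PIndec.iso_of_fac {X Y : Pr.{u} R} (hX : PIndec X) (hY : PIndec Y) {f : X.V →ₗ[R] Y.V}
    {g : Y.V →ₗ[R] X.V} (hf : PrMor X Y f) (hg : PrMor Y X g)
    (h : Function.Injective (g ∘ₗ f)) :
    ∃ g' : Y.V →ₗ[R] X.V, PrMor Y X g' ∧ g' ∘ₗ f = LinearMap.id ∧ f ∘ₗ g' = LinearMap.id := by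
  have := hX.1
  obtain ⟨t, ht, ht1⟩ := (hg.comp hf).inv h
  have h1 : ∀ x, t (g (f x)) = x := fun x => LinearMap.congr_fun ht1 x
  refine ⟨t ∘ₗ g, ht.comp hg, LinearMap.ext h1, ?_⟩
  rcases hY.2 (f ∘ₗ t ∘ₗ g) (hf.comp (ht.comp hg)) (by
    ext y; exact congrArg f (h1 (t (g y)))) with h0 | h0
  · obtain ⟨x, hx⟩ := exists_ne (0 : X.V)
    refine absurd ?_ hx
    have h2 : f (t (g (f x))) = 0 := LinearMap.congr_fun h0 (f x)
    rw [h1] at h2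
    rw [← h1 x, h2, map_zero, map_zero]
  · exact h0

/-- Sub-pair cut out by an endomorphism. -/
def subPair (X : Pr.{u} R) (A : Submodule R X.V) : Pr.{u} R := ⟨A, X.U.comap A.subtype⟩

theorem exists_indec (m : ℕ) : ∀ X : Pr.{u} R, Module.length R X.V < m →
    ∃ S : Set (Pr.{u} R), S.Finite ∧ (∀ Z ∈ S, PIndec Z) ∧
      (1 : Module.End R X.V) ∈ AddSubmonoid.closure (PFac S X) := by
  induction m with
  | zero => intro X h; simp at h
  | succ m ih =>
    intro X hXm
    by_cases hX : PIndec X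
    · exact ⟨{X}, Set.finite_singleton X, by simpa using hX,
        AddSubmonoid.subset_closure ⟨X, rfl, 1, 1, PrMor.one X, PrMor.one X, rfl⟩⟩
    by_cases hn : Nontrivial X.V
    swap
    · refine ⟨∅, Set.finite_empty, by simp, ?_⟩
      have : Subsingleton X.V := not_nontrivial_iff_subsingleton.1 hn
      rw [Subsingleton.elim (1 : Module.End R X.V) 0]
      exact zero_mem _
    have : ∃ e : Module.End R X.V, PrMor X X e ∧ e * e = e ∧ e ≠ 0 ∧ e ≠ 1 := by
      by_contra hcon
      push Not at hcon
      exact hX ⟨hn, fun e h1 h2 => or_iff_not_imp_left.2 (hcon e h1 h2)⟩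
    obtain ⟨e, he, hee, he0, he1⟩ := this
    have key : ∀ e : Module.End R X.V, PrMor X X e → e * e = e → e ≠ 1 →
        ∃ S : Set (Pr.{u} R), S.Finite ∧ (∀ Z ∈ S, PIndec Z) ∧
          e ∈ AddSubmonoid.closure (PFac S X) := by
      intro e he hee he1
      have hv : ∀ v, e (e v) = e v := fun v => LinearMap.congr_fun hee v
      have hr : LinearMap.range e ≠ ⊤ := by
        intro htop
        apply he1
        ext v
        obtain ⟨w, rfl⟩ := LinearMap.range_eq_top.1 htop v
        exact hv w
      obtain ⟨S, hS1, hS2, hS3⟩ := ih (subPair X (LinearMap.range e)) (by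
        have h1 : Module.length R (LinearMap.range e) < Module.length R X.V :=
          Submodule.length_lt hr
        have h2 : Module.length R X.V ≤ m := Order.lt_add_one_iff_of_not_isMax
          (by simp) |>.1 (by exact_mod_cast hXm)
        exact h1.trans_le h2)
      refine ⟨S, hS1, hS2, ?_⟩
      have main : ∀ h ∈ AddSubmonoid.closure (PFac S (subPair X (LinearMap.range e))),
          ((LinearMap.range e).subtype ∘ₗ h ∘ₗ e.rangeRestrict : Module.End R X.V) ∈
            AddSubmonoid.closure (PFac S X) := by
        intro h hh
        induction hh using AddSubmonoid.closure_induction with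
        | mem s hs =>
          obtain ⟨Z, hZ, f, g, hf, hg, rfl⟩ := hs
          refine AddSubmonoid.subset_closure ⟨Z, hZ, f ∘ₗ e.rangeRestrict,
            (LinearMap.range e).subtype ∘ₗ g, ?_, ?_, rfl⟩
          · exact fun x hx => hf _ (he x hx)
          · exact fun x hx => hg x hx
        | zero =>
          refine Set.mem_of_eq_of_mem ?_ (AddSubmonoid.zero_mem _)
          ext v
          rfl
        | add x y _ _ hx hy =>
          refine Set.mem_of_eq_of_mem ?_ (AddSubmonoid.add_mem _ hx hy)
          ext v
          rfl
      have := main _ hS3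
      exact this
    obtain ⟨S, hS1, hS2, hS3⟩ := key e he hee he1
    obtain ⟨T, hT1, hT2, hT3⟩ := key (1 - e) ((PrMor.one X).sub he) (by
      rw [mul_sub, mul_one, sub_mul, one_mul, hee, sub_self, sub_zero]) (by
      intro h; apply he0; simpa using h)
    refine ⟨S ∪ T, hS1.union hT1, ?_, ?_⟩
    · rintro Z (hZ | hZ)
      · exact hS2 Z hZ
      · exact hT2 Z hZ
    · rw [← add_sub_cancel e 1]
      refine add_mem (AddSubmonoid.closure_mono ?_ hS3) (AddSubmonoid.closure_mono ?_ hT3)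
      · rintro h ⟨Z, hZ, r⟩; exact ⟨Z, Or.inl hZ, r⟩
      · rintro h ⟨Z, hZ, r⟩; exact ⟨Z, Or.inr hZ, r⟩

/-- Finitely many indecomposable pairs. -/
theorem finite_indec {S : Set (Pr.{u} R)} (hS : S.Finite)
    (h : ∀ X : Pr.{u} R, (LinearMap.id : X.V →ₗ[R] X.V) ∈ AddSubmonoid.closure (PFac S X)) :
    ∃ T : Set (Pr.{u} R), T.Finite ∧ ∀ X : Pr.{u} R, PIndec X → ∃ Z ∈ T, ∃ f g,
      PrMor X Z f ∧ PrMor Z X g ∧ g ∘ₗ f = LinearMap.id ∧ f ∘ₗ g = LinearMap.id := by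
  have hex : ∀ X : Pr.{u} R, ∃ S : Set (Pr.{u} R), S.Finite ∧ (∀ Z ∈ S, PIndec Z) ∧
      (1 : Module.End R X.V) ∈ AddSubmonoid.closure (PFac S X) := by
    intro X
    obtain ⟨m, hm⟩ := ENat.ne_top_iff_exists.1 (Module.length_ne_top (R := R) (M := X.V))
    refine exists_indec (m + 1) X ?_
    rw [← hm]
    exact_mod_cast Nat.lt_succ_self m
  choose T hT1 hT2 hT3 using hex
  refine ⟨⋃ Y ∈ S, T Y, hS.biUnion fun Y _ => hT1 Y, ?_⟩
  intro X hX
  have hid : (1 : Module.End R X.V) ∈ AddSubmonoid.closure (PFac (⋃ Y ∈ S, T Y) X) := by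
    refine (AddSubmonoid.closure_le.2 ?_ : AddSubmonoid.closure (PFac S X) ≤ _) (h X)
    rintro _ ⟨Y, hY, f, g, hf, hg, rfl⟩
    have main : ∀ h ∈ AddSubmonoid.closure (PFac (T Y) Y),
        g ∘ₗ h ∘ₗ f ∈ AddSubmonoid.closure (PFac (⋃ Y ∈ S, T Y) X) := by
      intro h hh
      induction hh using AddSubmonoid.closure_induction with
      | mem s hs =>
        obtain ⟨Z, hZ, f', g', hf', hg', rfl⟩ := hs
        exact AddSubmonoid.subset_closure ⟨Z, Set.mem_biUnion hY hZ, f' ∘ₗ f, g ∘ₗ g',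
          hf'.comp hf, hg.comp hg', rfl⟩
      | zero => simp
      | add x y _ _ hx hy =>
        rw [LinearMap.add_comp, LinearMap.comp_add]
        exact add_mem hx hy
    exact main _ (hT3 Y)
  obtain ⟨s, ⟨Z, hZ, f, g, hf, hg, rfl⟩, hs⟩ := hX.exists_inj (by
    rintro _ ⟨Z, hZ, f, g, hf, hg, rfl⟩; exact hg.comp hf) hid
  obtain ⟨Y, hY, hZY⟩ := Set.mem_iUnion₂.1 hZ
  obtain ⟨g', h1, h2, h3⟩ := hX.iso_of_fac (hT2 Y Z hZY) hf hg hs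
  exact ⟨Z, hZ, f, g', hf, h1, h2, h3⟩

end Indec


section Arrows
variable {R : Type} [Ring R]

/-- Monomorphisms between finitely generated modules. -/
def SObj (R : Type) [Ring R] (X : Arrow (ModuleCat.{u} R)) : Prop :=
  Module.Finite R X.left ∧ Module.Finite R X.right ∧ Mono X.hom

/-- The inclusion of the submodule. -/
def pairArrow (X : Pr.{u} R) : Arrow (ModuleCat.{u} R) := Arrow.mk (ModuleCat.ofHom X.U.subtype)

/-- Functoriality. -/
def pairHom {X Y : Pr.{u} R} (f : X.V →ₗ[R] Y.V) (hf : PrMor X Y f) :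
    pairArrow X ⟶ pairArrow Y :=
  Arrow.homMk (u := ModuleCat.ofHom (f.restrict hf)) (v := ModuleCat.ofHom f) (by ext x; rfl)

theorem pairHom_comp {X Y Z : Pr.{u} R} (f : X.V →ₗ[R] Y.V) (hf : PrMor X Y f) (g : Y.V →ₗ[R] Z.V)
    (hg : PrMor Y Z g) : pairHom f hf ≫ pairHom g hg = pairHom (g ∘ₗ f) (hg.comp hf) := rfl

theorem pairHom_id (X : Pr.{u} R) : pairHom (LinearMap.id : X.V →ₗ[R] X.V) (fun _ h => h) =
    𝟙 (pairArrow X) := rfl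

theorem pairHom_comp_id {X Y : Pr.{u} R} {f : X.V →ₗ[R] Y.V} (hf : PrMor X Y f)
    {g : Y.V →ₗ[R] X.V} (hg : PrMor Y X g) (h : ∀ x, g (f x) = x) :
    pairHom f hf ≫ pairHom g hg = 𝟙 (pairArrow X) := by
  have h' : g ∘ₗ f = LinearMap.id := LinearMap.ext h
  rw [pairHom_comp, ← pairHom_id]
  congr 1

theorem pairArrow_iso {X Y : Pr.{u} R} {f : X.V →ₗ[R] Y.V} {g : Y.V →ₗ[R] X.V}
    (hf : PrMor X Y f) (hg : PrMor Y X g) (h1 : g ∘ₗ f = LinearMap.id)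
    (h2 : f ∘ₗ g = LinearMap.id) : Nonempty (pairArrow X ≅ pairArrow Y) := by
  refine ⟨⟨pairHom f hf, pairHom g hg, ?_, ?_⟩⟩
  · rw [pairHom_comp, ← pairHom_id]; congr 1
  · rw [pairHom_comp, ← pairHom_id]; congr 1

theorem pairArrow_mor {X Y : Pr.{u} R} (a : pairArrow X ⟶ pairArrow Y) :
    PrMor X Y a.right.hom := by
  intro x hx
  have h : a.left ≫ ModuleCat.ofHom Y.U.subtype = ModuleCat.ofHom X.U.subtype ≫ a.right := a.w
  let al : X.U →ₗ[R] Y.U := a.left.hom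
  let ar : X.V →ₗ[R] Y.V := a.right.hom
  have h' : ∀ u : X.U, (al u : Y.V) = ar u := fun u =>
    LinearMap.congr_fun (congrArg ModuleCat.Hom.hom h) u
  change ar x ∈ Y.U
  rw [← h' ⟨x, hx⟩]
  exact (al ⟨x, hx⟩).2

/-- The pair attached to a monomorphism. -/
def toPair (X : Arrow (ModuleCat.{u} R)) [Module.Finite R X.right] : Pr.{u} R :=
  ⟨X.right, LinearMap.range X.hom.hom⟩

theorem toPair_iso (X : Arrow (ModuleCat.{u} R)) (hX : SObj R X) :
    haveI := hX.2.1
    Nonempty (X ≅ pairArrow (toPair X)) := by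
  haveI := hX.2.1
  have hi : Function.Injective X.hom.hom := (ModuleCat.mono_iff_injective _).1 hX.2.2
  refine ⟨Arrow.isoMk (LinearEquiv.ofInjective X.hom.hom hi).toModuleIso (Iso.refl _) ?_⟩
  ext x
  rfl

variable {C : Type*} [Category C] [Preadditive C] [HasBinaryBiproducts C]

theorem arrow_biprod_iso {X Y Z : Arrow C} (i₁ : Y ⟶ X) (p₁ : X ⟶ Y) (i₂ : Z ⟶ X) (p₂ : X ⟶ Z)
    (h11 : i₁ ≫ p₁ = 𝟙 Y) (h22 : i₂ ≫ p₂ = 𝟙 Z)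
    (h12l : i₁.left ≫ p₂.left = 0) (h12r : i₁.right ≫ p₂.right = 0)
    (h21l : i₂.left ≫ p₁.left = 0) (h21r : i₂.right ≫ p₁.right = 0)
    (hl : p₁.left ≫ i₁.left + p₂.left ≫ i₂.left = 𝟙 X.left)
    (hr : p₁.right ≫ i₁.right + p₂.right ≫ i₂.right = 𝟙 X.right) :
    Nonempty (X ≅ arrowBiprod Y Z) := by
  have h11l : i₁.left ≫ p₁.left = 𝟙 _ := congrArg CommaMorphism.left h11
  have h11r : i₁.right ≫ p₁.right = 𝟙 _ := congrArg CommaMorphism.right h11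
  have h22l : i₂.left ≫ p₂.left = 𝟙 _ := congrArg CommaMorphism.left h22
  have h22r : i₂.right ≫ p₂.right = 𝟙 _ := congrArg CommaMorphism.right h22
  have w1 : p₁.left ≫ Y.hom = X.hom ≫ p₁.right := p₁.w
  have w2 : p₂.left ≫ Z.hom = X.hom ≫ p₂.right := p₂.w
  let l : X.left ≅ Y.left ⊞ Z.left :=
    ⟨biprod.lift p₁.left p₂.left, biprod.desc i₁.left i₂.left, by rw [biprod.lift_desc, hl], by
      ext <;> simp [*]⟩
  let r : X.right ≅ Y.right ⊞ Z.right :=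
    ⟨biprod.lift p₁.right p₂.right, biprod.desc i₁.right i₂.right, by rw [biprod.lift_desc, hr], by
      ext <;> simp [*]⟩
  refine ⟨Arrow.isoMk l r ?_⟩
  change biprod.lift p₁.left p₂.left ≫ biprod.map Y.hom Z.hom =
    X.hom ≫ biprod.lift p₁.right p₂.right
  ext <;> simp [w1, w2]

theorem subsingleton_of_isZero {X : Arrow (ModuleCat.{u} R)} (h : IsZero X) :
    Subsingleton X.right := by
  have h1 : 𝟙 X = Arrow.homMk (u := 0) (v := 0) (by simp) := h.eq_of_src _ _
  have h2 : 𝟙 X.right = 0 := congrArg CommaMorphism.right h1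
  refine ⟨fun a b => ?_⟩
  have h3 : ∀ a : X.right, a = 0 := fun a =>
    LinearMap.congr_fun (congrArg ModuleCat.Hom.hom h2) a
  rw [h3 a, h3 b]

theorem isZero_of_subsingleton {X : Arrow (ModuleCat.{u} R)} (hm : Mono X.hom)
    (h : Subsingleton X.right) : IsZero X := by
  have hi : Function.Injective X.hom.hom := (ModuleCat.mono_iff_injective _).1 hm
  have hl : Subsingleton X.left := hi.subsingleton
  have zl : IsZero X.left := ModuleCat.isZero_of_subsingleton _
  have zr : IsZero X.right := ModuleCat.isZero_of_subsingleton _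
  refine ⟨fun Y => ⟨⟨⟨Arrow.homMk (u := 0) (v := 0) (by simp)⟩, fun f => ?_⟩⟩,
    fun Y => ⟨⟨⟨Arrow.homMk (u := 0) (v := 0) (by simp)⟩, fun f => ?_⟩⟩⟩
  · exact Arrow.hom_ext _ _ (zl.eq_of_src _ _) (zr.eq_of_src _ _)
  · exact Arrow.hom_ext _ _ (zl.eq_of_tgt _ _) (zr.eq_of_tgt _ _)

theorem pairArrow_SObj [IsNoetherianRing R] (X : Pr.{u} R) : SObj R (pairArrow X) :=
  ⟨inferInstanceAs (Module.Finite R X.U), inferInstanceAs (Module.Finite R X.V),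
    (ModuleCat.mono_iff_injective _).2 X.U.injective_subtype⟩

theorem pIndec_of_indec [IsNoetherianRing R] (X : Pr.{u} R)
    (hX : IndecArrowIn (SObj R) (pairArrow X)) : PIndec X := by
  refine ⟨?_, ?_⟩
  · by_contra h
    have : Subsingleton X.V := not_nontrivial_iff_subsingleton.1 h
    exact hX.1 (isZero_of_subsingleton (pairArrow_SObj X).2.2 this)
  · intro e he hee
    have he' : PrMor X X (1 - e) := (PrMor.one X).sub he
    have hv : ∀ v, e (e v) = e v := fun v => LinearMap.congr_fun hee v
    have A1 : PrMor (subPair X (LinearMap.range e)) X (LinearMap.range e).subtype :=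
      fun _ h => h
    have A2 : PrMor (subPair X (LinearMap.range (1 - e))) X (LinearMap.range (1 - e)).subtype :=
      fun _ h => h
    have B1 : PrMor X (subPair X (LinearMap.range e)) e.rangeRestrict := fun x h => he x h
    have B2 : PrMor X (subPair X (LinearMap.range (1 - e)))
        (LinearMap.rangeRestrict (1 - e : Module.End R X.V)) :=
      fun x h => he' x h
    have k1 : ∀ y : LinearMap.range e, e y = y := by rintro ⟨_, v, rfl⟩; exact hv v
    have k2 : ∀ y : LinearMap.range (1 - e), e y = 0 := by
      rintro ⟨_, v, rfl⟩
      change e (v - e v) = 0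
      rw [map_sub, hv, sub_self]
    have iso := arrow_biprod_iso (pairHom _ A1) (pairHom _ B1) (pairHom _ A2) (pairHom _ B2)
      (pairHom_comp_id A1 B1 fun y => Subtype.ext (k1 y))
      (pairHom_comp_id A2 B2 fun (y : LinearMap.range (1 - e)) => by
        apply Subtype.ext
        change (y : X.V) - e y = y
        rw [k2 y, sub_zero])
      (by
        ext y; apply Subtype.ext; apply Subtype.ext
        change (y.1.1 : X.V) - e y.1.1 = 0
        rw [k1 y.1, sub_self])
      (by
        ext y; apply Subtype.ext
        change (y.1 : X.V) - e y.1 = 0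
        rw [k1 y, sub_self])
      (by
        ext y; apply Subtype.ext; apply Subtype.ext
        exact k2 y.1)
      (by
        ext y; apply Subtype.ext
        exact k2 y)
      (by
        ext y; apply Subtype.ext
        change e y.1 + (y.1 - e y.1) = y.1
        abel)
      (by
        refine ModuleCat.hom_ext (LinearMap.ext fun (y : X.V) => ?_)
        change e y + (y - e y) = y
        abel)
    rcases hX.2 _ _ (pairArrow_SObj _) (pairArrow_SObj _) iso with h | h
    · left
      have hs : Subsingleton (LinearMap.range e) := subsingleton_of_isZero h
      ext v
      exact congrArg Subtype.val (hs.elim ⟨e v, v, rfl⟩ 0)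
    · right
      have hs : Subsingleton (LinearMap.range (1 - e)) := subsingleton_of_isZero h
      ext v
      have : v - e v = 0 := congrArg Subtype.val (hs.elim ⟨v - e v, v, rfl⟩ 0)
      exact (sub_eq_zero.1 this).symm

theorem indec_iso {P : Arrow C → Prop} {X Y : Arrow C} (i : X ≅ Y) (h : IndecArrowIn P X) :
    IndecArrowIn P Y :=
  ⟨fun hz => h.1 (hz.of_iso i), fun A B hA hB ⟨j⟩ => h.2 A B hA hB ⟨i ≪≫ j⟩⟩

theorem frt_of_finite [IsArtinianRing R] [IsNoetherianRing R] {S : Set (Pr.{u} R)} (hS : S.Finite)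
    (h : ∀ X : Pr.{u} R, (LinearMap.id : X.V →ₗ[R] X.V) ∈ AddSubmonoid.closure (PFac S X)) :
    FRTArrow (SObj.{u} R) := by
  obtain ⟨T, hT, h⟩ := finite_indec hS h
  refine ⟨pairArrow '' T, hT.image _, ?_⟩
  intro X hX hXi
  haveI := hX.2.1
  obtain ⟨i⟩ := toPair_iso X hX
  obtain ⟨Z, hZ, f, g, hf, hg, h1, h2⟩ := h (toPair X) (pIndec_of_indec _ (indec_iso i hXi))
  obtain ⟨j⟩ := pairArrow_iso hf hg h1 h2
  exact ⟨pairArrow Z, ⟨Z, hZ, rfl⟩, ⟨i ≪≫ j⟩⟩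

theorem indec_of_pIndec (X : Pr.{u} R) (hX : PIndec X) :
    IndecArrowIn (SObj R) (pairArrow X) := by
  refine ⟨fun hz => ?_, ?_⟩
  · have : Subsingleton X.V := subsingleton_of_isZero hz
    have := hX.1
    exact not_nontrivial X.V this
  · rintro Y Z hY hZ ⟨i⟩
    let E : pairArrow X ⟶ pairArrow X := i.hom ≫ (Arrow.homMk
      (u := (biprod.fst ≫ biprod.inl : Y.left ⊞ Z.left ⟶ Y.left ⊞ Z.left))
      (v := (biprod.fst ≫ biprod.inl : Y.right ⊞ Z.right ⟶ Y.right ⊞ Z.right))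
      (by simp [arrowBiprod]) : arrowBiprod Y Z ⟶ arrowBiprod Y Z) ≫ i.inv
    let a : X.V →ₗ[R] ↑(Y.right ⊞ Z.right) := i.hom.right.hom
    let b : ↑(Y.right ⊞ Z.right) →ₗ[R] X.V := i.inv.right.hom
    have hab : ∀ x, b (a x) = x := fun x =>
      LinearMap.congr_fun (congrArg (fun t => ModuleCat.Hom.hom (CommaMorphism.right t))
        i.hom_inv_id) x
    have hba : ∀ x, a (b x) = x := fun x =>
      LinearMap.congr_fun (congrArg (fun t => ModuleCat.Hom.hom (CommaMorphism.right t))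
        i.inv_hom_id) x
    let p := (biprod.fst : Y.right ⊞ Z.right ⟶ Y.right).hom
    let q := (biprod.snd : Y.right ⊞ Z.right ⟶ Z.right).hom
    let j := (biprod.inl : Y.right ⟶ Y.right ⊞ Z.right).hom
    let l := (biprod.inr : Z.right ⟶ Y.right ⊞ Z.right).hom
    have hpj : ∀ y, p (j y) = y := fun y =>
      LinearMap.congr_fun (congrArg ModuleCat.Hom.hom
        (biprod.inl_fst : (biprod.inl : Y.right ⟶ Y.right ⊞ Z.right) ≫ _ = _)) y
    have hql : ∀ y, q (l y) = y := fun y =>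
      LinearMap.congr_fun (congrArg ModuleCat.Hom.hom
        (biprod.inr_snd : (biprod.inr : Z.right ⟶ Y.right ⊞ Z.right) ≫ _ = _)) y
    have hpl : ∀ y, p (l y) = 0 := fun y =>
      LinearMap.congr_fun (congrArg ModuleCat.Hom.hom
        (biprod.inr_fst : (biprod.inr : Z.right ⟶ Y.right ⊞ Z.right) ≫ _ = _)) y
    have hE : ∀ x : X.V, E.right.hom x = b (j (p (a x))) := fun x => rfl
    rcases hX.2 E.right.hom (pairArrow_mor E) (by
      ext x
      change E.right.hom (E.right.hom x) = E.right.hom x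
      rw [hE, hE, hba, hpj]) with h | h
    · left
      refine isZero_of_subsingleton hY.2.2 ⟨?_⟩
      have h0 : ∀ y : Y.right, y = 0 := by
        intro y
        have := hE (b (j y))
        rw [h, hba, hpj] at this
        have h1 : b (j y) = 0 := this.symm
        rw [← hpj y, ← hba (j y), h1, map_zero, map_zero]
      intro y y'
      rw [h0 y, h0 y']
    · right
      refine isZero_of_subsingleton hZ.2.2 ⟨?_⟩
      have h0 : ∀ y : Z.right, y = 0 := by
        intro y
        have := hE (b (l y))
        rw [h, hba, hpl, map_zero, map_zero] at this
        have h1 : b (l y) = 0 := this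
        rw [← hql y, ← hba (l y), h1, map_zero, map_zero]
      intro y y'
      rw [h0 y, h0 y']

end Arrows


section Elements
variable {k : Type} [Field k] {n : ℕ} {M N : PRep.{u} k (Fin 3 × Fin n)}

theorem single_mem_rowSub (hM : PMono (gridLe n) M) (c : Fin 3) (j : Fin n) {w : M.V}
    (hw : w ∈ M.F (c, j)) : RowMod.mk (Pi.single j w) ∈ rowSub M hM c := by
  intro i
  by_cases h : i = j
  · subst h
    rw [RowMod.get_mk, Pi.single_eq_same]; exact hw
  · rw [RowMod.get_mk, Pi.single_eq_of_ne h]; exact zero_mem _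

/-- The homogeneous element of degree `j` given by `w`. -/
def xel (hM : PMono (gridLe n) M) (j : Fin n) (w : M.V) (hw : w ∈ M.F (2, j)) : (gPair M hM).V :=
  Submodule.mkQ _ ⟨RowMod.mk (Pi.single j w), single_mem_rowSub hM 2 j hw⟩

theorem xel_congr (hM : PMono (gridLe n) M) (j : Fin n) {w w' : M.V} (hw : w ∈ M.F (2, j))
    (h : w = w') : xel hM j w hw = xel hM j w' (h ▸ hw) := by
  subst h; rfl

theorem xel_add (hM : PMono (gridLe n) M) (j : Fin n) {w w' : M.V} (hw : w ∈ M.F (2, j))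
    (hw' : w' ∈ M.F (2, j)) :
    xel hM j (w + w') (add_mem hw hw') = xel hM j w hw + xel hM j w' hw' := by
  refine Eq.trans ?_ (map_add (Submodule.mkQ _) _ _)
  refine congrArg (Submodule.mkQ _) (Subtype.ext ?_)
  apply RowMod.ext
  intro i
  exact congrFun (Pi.single_add (f := fun _ => M.V) j w w') i

theorem xel_eq_zero (hM : PMono (gridLe n) M) (j : Fin n) {w : M.V} (hw : w ∈ M.F (2, j)) :
    xel hM j w hw = 0 ↔ w ∈ M.F (0, j) := by
  refine (Submodule.Quotient.mk_eq_zero _).trans ⟨fun h => ?_, fun h => ?_⟩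
  · have := h j
    simpa [RowMod.get_mk] using this
  · exact single_mem_rowSub hM 0 j h

theorem xel_mem (hM : PMono (gridLe n) M) (j : Fin n) {w : M.V} (hw : w ∈ M.F (2, j)) :
    xel hM j w hw ∈ (gPair M hM).U ↔ w ∈ M.F (1, j) := by
  refine ⟨?_, fun h => ⟨_, single_mem_rowSub hM 1 j h, rfl⟩⟩
  rintro ⟨m, hm, hmq⟩
  have h1 := ((Submodule.Quotient.eq _).1 hmq) j
  have h2 : m.1.get j - w ∈ M.F (0, j) := by
    simpa [RowMod.get_mk, RowMod.get_sub] using h1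
  have h3 : m.1.get j ∈ M.F (1, j) := hm j
  have h4 := sub_mem h3 (hM (0, j) (1, j) ⟨by simp, le_rfl⟩ h2)
  simpa using h4

theorem smul_single (A : OpLT k n) (j : Fin n) (w : M.V) (l : Fin n) :
    (A • (RowMod.mk (Pi.single j w) : RowMod n M.V)).get l =
      (A.un : Matrix (Fin n) (Fin n) k) j l • w := by
  rw [RowMod.get_smul, Finset.sum_eq_single j]
  · rw [RowMod.get_mk, Pi.single_eq_same]
  · intro i _ hi
    rw [RowMod.get_mk, Pi.single_eq_of_ne hi, smul_zero]
  · simp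

theorem eLT_smul_xel (hM : PMono (gridLe n) M) {j l : Fin n} (h : l ≤ j) (c : k) {w : M.V}
    (hw : w ∈ M.F (2, j)) :
    (OpLT.mk (c • eLT j l) : OpLT k n) • xel hM j w hw =
      xel hM l (c • w) (Submodule.smul_mem _ _ (hM (2, j) (2, l) ⟨le_rfl, h⟩ hw)) := by
  refine (map_smul (Submodule.mkQ _) _ _).symm.trans ?_
  refine congrArg (Submodule.mkQ _) (Subtype.ext ?_)
  apply RowMod.ext
  intro i
  refine (smul_single _ j w i).trans ?_
  rw [OpLT.un_mk]
  change (c * (eLT (k := k) j l : Matrix (Fin n) (Fin n) k) j i) • w = (Pi.single l (c • w) : Fin n → M.V) i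
  rw [eLT_apply]
  by_cases hi : l = i
  · subst hi; simp [h]
  · rw [Pi.single_eq_of_ne (Ne.symm hi), if_neg (fun h => hi h.2.2), mul_zero, zero_smul]

theorem exists_xel (hM : PMono (gridLe n) M) (v : (gPair M hM).V) (j : Fin n) :
    ∃ (w : M.V) (hw : w ∈ M.F (2, j)), (OpLT.mk (eLT j j) : OpLT k n) • v = xel hM j w hw := by
  obtain ⟨m, rfl⟩ := Submodule.mkQ_surjective _ v
  refine ⟨m.1.get j, m.2 j, ?_⟩
  refine (map_smul (Submodule.mkQ _) _ _).symm.trans ?_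
  refine congrArg (Submodule.mkQ _) (Subtype.ext ?_)
  apply RowMod.ext
  intro i
  change (OpLT.mk (eLT (k := k) j j) • m.1).get i = (Pi.single j (m.1.get j) : Fin n → M.V) i
  rw [RowMod.get_smul, OpLT.un_mk, Finset.sum_eq_single j]
  · rw [eLT_apply]
    by_cases hi : j = i
    · subst hi; simp
    · rw [Pi.single_eq_of_ne (Ne.symm hi), if_neg (fun h => hi h.2.2), zero_smul]
  · intro b _ hb
    rw [eLT_apply, if_neg (fun h => hb h.2.1.symm), zero_smul]
  · simp

theorem map_xel (hM : PMono (gridLe n) M) (hN : PMono (gridLe n) N)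
    (θ : (gPair M hM).V →ₗ[OpLT k n] (gPair N hN).V) (j : Fin n) {w : M.V}
    (hw : w ∈ M.F (2, j)) :
    ∃ (w' : N.V) (hw' : w' ∈ N.F (2, j)), θ (xel hM j w hw) = xel hN j w' hw' := by
  obtain ⟨w', hw', h⟩ := exists_xel hN (θ (xel hM j w hw)) j
  refine ⟨w', hw', ?_⟩
  rw [← h, ← map_smul]
  congr 1
  have := eLT_smul_xel hM (le_refl j) 1 hw
  rw [one_smul] at this
  rw [this]
  exact xel_congr hM j hw (one_smul k w).symm

theorem ext_xel (hM : PMono (gridLe n) M) (hN : PMono (gridLe n) N)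
    {θ φ : (gPair M hM).V →ₗ[OpLT k n] (gPair N hN).V}
    (h : ∀ j w hw, θ (xel hM j w hw) = φ (xel hM j w hw)) : θ = φ := by
  ext v
  have hv : v = ∑ j : Fin n, (OpLT.mk (eLT j j) : OpLT k n) • v := by
    rw [← Finset.sum_smul, ← OpLT.mk_sum, eLT_sum, OpLT.mk_one, one_smul]
  rw [hv, map_sum, map_sum]
  refine Finset.sum_congr rfl fun j _ => ?_
  obtain ⟨w, hw, hj⟩ := exists_xel hM v j
  rw [hj]
  exact h j w hw

end Elements

section Family
variable {k : Type} [Field k] {n : ℕ}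

/-- The level `P`. -/
def famP (k : Type) [Field k] (j : ℕ) : Submodule k (ULift.{u} (k × k × k)) where
  carrier := {w | (5 < j → w.down.1 = 0) ∧ (4 < j → w.down.2.1 = 0) ∧ (3 < j → w.down.2.2 = 0)}
  add_mem' {a b} ha hb := ⟨fun h => by simp [ha.1 h, hb.1 h], fun h => by simp [ha.2.1 h, hb.2.1 h],
    fun h => by simp [ha.2.2 h, hb.2.2 h]⟩
  zero_mem' := ⟨fun _ => rfl, fun _ => rfl, fun _ => rfl⟩
  smul_mem' c a ha := ⟨fun h => by simp [ha.1 h], fun h => by simp [ha.2.1 h],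
    fun h => by simp [ha.2.2 h]⟩

/-- The level `K`. -/
def famK (k : Type) [Field k] (j : ℕ) : Submodule k (ULift.{u} (k × k × k)) where
  carrier := {w | w.down.1 = 0 ∧ (0 < j → w.down.2.1 = 0) ∧ (1 < j → w.down.2.2 = 0)}
  add_mem' {a b} ha hb := ⟨by simp [ha.1, hb.1], fun h => by simp [ha.2.1 h, hb.2.1 h],
    fun h => by simp [ha.2.2 h, hb.2.2 h]⟩
  zero_mem' := ⟨rfl, fun _ => rfl, fun _ => rfl⟩
  smul_mem' c a ha := ⟨by simp [ha.1], fun h => by simp [ha.2.1 h],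
    fun h => by simp [ha.2.2 h]⟩

/-- The level `Q`. -/
def famQ (t : k) (j : ℕ) : Submodule k (ULift.{u} (k × k × k)) where
  carrier := {w | ∃ a b : k, (3 < j → a = 0) ∧ (2 < j → b = 0) ∧ w.down.1 = a + b * t ∧
    (0 < j → w.down.2.1 = a + b) ∧ (1 < j → w.down.2.2 = a)}
  add_mem' := by
    rintro w w' ⟨a, b, h1, h2, h3, h4, h5⟩ ⟨a', b', h1', h2', h3', h4', h5'⟩
    refine ⟨a + a', b + b', fun h => by simp [h1 h, h1' h], fun h => by simp [h2 h, h2' h], ?_,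
      fun h => ?_, fun h => ?_⟩
    · simp [h3, h3']; ring
    · simp [h4 h, h4' h]; ring
    · simp [h5 h, h5' h]
  zero_mem' := ⟨0, 0, by simp, by simp, by simp, by simp, by simp⟩
  smul_mem' := by
    rintro c w ⟨a, b, h1, h2, h3, h4, h5⟩
    refine ⟨c * a, c * b, fun h => by simp [h1 h], fun h => by simp [h2 h], ?_,
      fun h => ?_, fun h => ?_⟩
    · simp [h3]; ring
    · simp [h4 h]; ring
    · simp [h5 h]

/-- The one-parameter family. -/
def famRep (k : Type) [Field k] (n : ℕ) (t : k) : PRep.{u} k (Fin 3 × Fin n) where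
  V := ULift.{u} (k × k × k)
  F := fun p => if p.1 = 0 then famK k p.2 else if p.1 = 1 then famQ t p.2 else famP k p.2

theorem famP_mono {j j' : ℕ} (h : j' ≤ j) : famP.{u} k j ≤ famP k j' :=
  fun _ hw => ⟨fun h' => hw.1 (by omega), fun h' => hw.2.1 (by omega), fun h' => hw.2.2 (by omega)⟩

theorem famK_mono {j j' : ℕ} (h : j' ≤ j) : famK.{u} k j ≤ famK k j' :=
  fun _ hw => ⟨hw.1, fun h' => hw.2.1 (by omega), fun h' => hw.2.2 (by omega)⟩

theorem famQ_mono (t : k) {j j' : ℕ} (h : j' ≤ j) : famQ.{u} t j ≤ famQ t j' := by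
  rintro w ⟨a, b, h1, h2, h3, h4, h5⟩
  exact ⟨a, b, fun _ => h1 (by omega), fun _ => h2 (by omega), h3, fun _ => h4 (by omega),
    fun _ => h5 (by omega)⟩

theorem famK_le (t : k) (j : ℕ) : famK.{u} k j ≤ famQ t j :=
  fun w hw => ⟨0, 0, fun _ => rfl, fun _ => rfl, by simp [hw.1], fun h => by simp [hw.2.1 h],
    fun h => by simp [hw.2.2 h]⟩

theorem famQ_le (t : k) (j : ℕ) : famQ.{u} t j ≤ famP k j := by
  rintro w ⟨a, b, h1, h2, h3, h4, h5⟩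
  refine ⟨fun h => ?_, fun h => ?_, fun h => ?_⟩
  · rw [h3, h1 (by omega), h2 (by omega)]; simp
  · rw [h4 (by omega), h1 (by omega), h2 (by omega)]; simp
  · rw [h5 (by omega), h1 (by omega)]

theorem famRep_mono (t : k) : PMono (gridLe n) (famRep.{u} k n t) := by
  have hstep : ∀ c c' : Fin 3, c ≤ c' → ∀ j : Fin n,
      (famRep.{u} k n t).F (c, j) ≤ (famRep.{u} k n t).F (c', j) := by
    intro c c' hc j
    fin_cases c <;> fin_cases c' <;>
      first
        | exact le_rfl
        | exact famK_le t j
        | exact famQ_le t j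
        | exact (famK_le t j).trans (famQ_le t j)
        | exact absurd hc (by decide)
  rintro ⟨c, j⟩ ⟨c', j'⟩ ⟨hc, hj⟩
  refine le_trans ?_ (hstep c c' hc j')
  have hj' : (j' : ℕ) ≤ j := hj
  fin_cases c
  · exact famK_mono hj'
  · exact famQ_mono t hj'
  · exact famP_mono hj'

/-- The pairs of the family. -/
def famPair (k : Type) [Field k] (n : ℕ) (t : k) : Pr.{u} (OpLT k n) :=
  gPair (famRep k n t) (famRep_mono t)

/-- A vector. -/
def vec3 (a b c : k) : ULift.{u} (k × k × k) := ⟨(a, b, c)⟩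

/-- A homogeneous element of the pair. -/
def yel (t : k) (j : Fin n) (a b c : k) (h : vec3.{u} a b c ∈ famP k j) : (famPair.{u} k n t).V :=
  xel (famRep_mono t) j (vec3 a b c) h

theorem yel_smul (t : k) {j l : Fin n} (hl : l ≤ j) (s a b c : k) (h : vec3.{u} a b c ∈ famP k j)
    (h' : vec3.{u} (s * a) (s * b) (s * c) ∈ famP k l) :
    (OpLT.mk (s • eLT j l) : OpLT k n) • yel t j a b c h = yel t l (s * a) (s * b) (s * c) h' :=
  eLT_smul_xel (famRep_mono t) hl s h

theorem yel_add (t : k) {j : Fin n} (a b c a' b' c' : k) (h : vec3.{u} a b c ∈ famP k j)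
    (h' : vec3.{u} a' b' c' ∈ famP k j) (h'' : vec3.{u} (a + a') (b + b') (c + c') ∈ famP k j) :
    yel t j (a + a') (b + b') (c + c') h'' = yel t j a b c h + yel t j a' b' c' h' :=
  xel_add (famRep_mono t) j h h'

theorem yel_zero (t : k) {j : Fin n} {a b c : k} (h : vec3.{u} a b c ∈ famP k j) :
    yel t j a b c h = 0 ↔ vec3.{u} a b c ∈ famK k j :=
  xel_eq_zero (famRep_mono t) j h

theorem yel_mem (t : k) {j : Fin n} {a b c : k} (h : vec3.{u} a b c ∈ famP k j) :
    yel t j a b c h ∈ (famPair.{u} k n t).U ↔ vec3.{u} a b c ∈ famQ t j :=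
  xel_mem (famRep_mono t) j h

theorem yel_congr (t : k) {j : Fin n} {a b c a' b' c' : k} (h : vec3.{u} a b c ∈ famP k j)
    (h' : vec3.{u} a' b' c' ∈ famP k j) (ha : a = a') (hb : b = b') (hc : c = c') :
    yel t j a b c h = yel t j a' b' c' h' := by
  subst ha hb hc; rfl

theorem fam_act {t r : k} {θ : (famPair.{u} k n t).V →ₗ[OpLT k n] (famPair.{u} k n r).V}
    {j l : Fin n} {a b c a' b' c' : k} {h : vec3.{u} a b c ∈ famP k j}
    {h' : vec3.{u} a' b' c' ∈ famP k j} (e : θ (yel t j a b c h) = yel r j a' b' c' h')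
    (hl : l ≤ j) (s : k) {x y z x' y' z' : k} (p : vec3.{u} x y z ∈ famP k l)
    (p' : vec3.{u} x' y' z' ∈ famP k l) (h1 : s * a = x) (h2 : s * b = y) (h3 : s * c = z)
    (h1' : s * a' = x') (h2' : s * b' = y') (h3' : s * c' = z') :
    θ (yel t l x y z p) = yel r l x' y' z' p' := by
  subst h1 h2 h3 h1' h2' h3'
  rw [← yel_smul t hl s a b c h p, ← yel_smul r hl s a' b' c' h' p', map_smul, e]

theorem fam_hom (hn : 6 ≤ n) (t r : k) (θ : (famPair.{u} k n t).V →ₗ[OpLT k n] (famPair k n r).V)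
    (hθ : PrMor (famPair k n t) (famPair k n r) θ) :
    ∃ s : k, (s ≠ 0 → t = r) ∧ ∀ (j : Fin n) (a b c : k) (h : vec3.{u} a b c ∈ famP k j)
      (h' : vec3.{u} (s * a) (s * b) (s * c) ∈ famP k j),
      θ (yel t j a b c h) = yel r j (s * a) (s * b) (s * c) h' := by
  have map_yel : ∀ (j : Fin n) (a b c : k) (h : vec3.{u} a b c ∈ famP k j),
      ∃ (a' b' c' : k) (h' : vec3.{u} a' b' c' ∈ famP k j),
        θ (yel t j a b c h) = yel r j a' b' c' h' := by
    intro j a b c h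
    obtain ⟨w', hw', hh⟩ := map_xel (famRep_mono t) (famRep_mono r) θ j h
    exact ⟨w'.down.1, w'.down.2.1, w'.down.2.2, hw', hh⟩
  -- generators
  have m5 : vec3.{u} (1 : k) 0 0 ∈ famP k 5 := ⟨by simp, by simp [vec3], by simp [vec3]⟩
  have m4 : vec3.{u} (0 : k) 1 0 ∈ famP k 4 := ⟨by simp, by simp, by simp [vec3]⟩
  have m3 : vec3.{u} (0 : k) 0 1 ∈ famP k 3 := ⟨by simp, by simp, by simp⟩
  obtain ⟨a, b, c, h5, e5⟩ := map_yel ⟨5, by omega⟩ 1 0 0 m5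
  obtain ⟨a', b', c', h4, e4⟩ := map_yel ⟨4, by omega⟩ 0 1 0 m4
  obtain ⟨a'', b'', c'', h3, e3⟩ := map_yel ⟨3, by omega⟩ 0 0 1 m3
  obtain rfl : b = 0 := h5.2.1 (by simp)
  obtain rfl : c = 0 := h5.2.2 (by simp)
  obtain rfl : c' = 0 := h4.2.2 (by simp)
  -- killing
  have pz : ∀ (j : ℕ) (hj : j ≤ 3) (x y z : k), vec3.{u} x y z ∈ famP k j := fun j hj x y z =>
    ⟨fun h => by omega, fun h => by omega, fun h => by omega⟩
  have f0 : (⟨0, by omega⟩ : Fin n) ≤ ⟨4, by omega⟩ := Fin.mk_le_mk.2 (by omega)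
  have f1 : (⟨1, by omega⟩ : Fin n) ≤ ⟨3, by omega⟩ := Fin.mk_le_mk.2 (by omega)
  have k0 := fam_act e4 f0 1 (pz 0 (by omega) _ _ _) (pz 0 (by omega) _ _ _)
    rfl rfl rfl rfl rfl rfl
  have k0' := (yel_zero r _).1 (k0.symm.trans ((congrArg θ ((yel_zero t _).2
    ⟨by simp [vec3], fun h => absurd h (by simp), fun h => absurd h (by simp)⟩)).trans
      (map_zero θ)))
  have ha' : a' = 0 := by simpa [vec3] using k0'.1
  have k1 := fam_act e3 f1 1 (pz 1 (by omega) _ _ _) (pz 1 (by omega) _ _ _)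
    rfl rfl rfl rfl rfl rfl
  have k1' := (yel_zero r _).1 (k1.symm.trans ((congrArg θ ((yel_zero t _).2
    ⟨by simp [vec3], fun h => by simp [vec3], fun h => absurd h (by simp)⟩)).trans
      (map_zero θ)))
  have ha'' : a'' = 0 := by simpa [vec3] using k1'.1
  have hb'' : b'' = 0 := by simpa [vec3] using k1'.2.1 (by simp)
  subst ha' ha'' hb''
  -- diagonal form
  have diag : ∀ (j : Fin n) (x y z : k) (h : vec3.{u} x y z ∈ famP k j)
      (h' : vec3.{u} (x * a) (y * b') (z * c'') ∈ famP k j),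
      θ (yel t j x y z h) = yel r j (x * a) (y * b') (z * c'') h' := by
    intro j x y z h h'
    have p1 : ∀ s : k, (5 < (j : ℕ) → s = 0) → vec3.{u} s 0 0 ∈ famP k j :=
      fun s hs => ⟨hs, fun _ => rfl, fun _ => rfl⟩
    have p2 : ∀ s : k, (4 < (j : ℕ) → s = 0) → vec3.{u} 0 s 0 ∈ famP k j :=
      fun s hs => ⟨fun _ => rfl, hs, fun _ => rfl⟩
    have p3 : ∀ s : k, (3 < (j : ℕ) → s = 0) → vec3.{u} 0 0 s ∈ famP k j :=
      fun s hs => ⟨fun _ => rfl, fun _ => rfl, hs⟩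
    have q1 : ∀ hh hh', θ (yel t j x 0 0 hh) = yel r j (x * a) 0 0 hh' := by
      intro hh hh'
      by_cases hj : (j : ℕ) ≤ 5
      · exact fam_act e5 hj x hh hh' (by simp) (by simp) (by simp) (by simp) (by simp) (by simp)
      · obtain rfl : x = 0 := hh.1 (by omega)
        refine (congrArg θ ((yel_zero t hh).2 (zero_mem _))).trans ((map_zero θ).trans ?_)
        refine ((yel_zero r hh').2 ?_).symm
        simp only [zero_mul]
        exact zero_mem _
    have q2 : ∀ hh hh', θ (yel t j 0 y 0 hh) = yel r j 0 (y * b') 0 hh' := by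
      intro hh hh'
      by_cases hj : (j : ℕ) ≤ 4
      · exact fam_act e4 hj y hh hh' (by simp) (by simp) (by simp) (by simp) (by simp) (by simp)
      · obtain rfl : y = 0 := hh.2.1 (by omega)
        refine (congrArg θ ((yel_zero t hh).2 (zero_mem _))).trans ((map_zero θ).trans ?_)
        refine ((yel_zero r hh').2 ?_).symm
        simp only [zero_mul]
        exact zero_mem _
    have q3 : ∀ hh hh', θ (yel t j 0 0 z hh) = yel r j 0 0 (z * c'') hh' := by
      intro hh hh'
      by_cases hj : (j : ℕ) ≤ 3
      · exact fam_act e3 hj z hh hh' (by simp) (by simp) (by simp) (by simp) (by simp) (by simp)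
      · obtain rfl : z = 0 := hh.2.2 (by omega)
        refine (congrArg θ ((yel_zero t hh).2 (zero_mem _))).trans ((map_zero θ).trans ?_)
        refine ((yel_zero r hh').2 ?_).symm
        simp only [zero_mul]
        exact zero_mem _
    have dec : ∀ (t x y z : k) (h : vec3.{u} x y z ∈ famP k j), yel t j x y z h =
        yel t j x 0 0 (p1 x h.1) + yel t j 0 y 0 (p2 y h.2.1) + yel t j 0 0 z (p3 z h.2.2) := by
      intro t x y z h
      have h12 : vec3.{u} (x + 0) (0 + y) (0 + 0) ∈ famP k j :=
        ⟨by simpa [vec3] using h.1, by simpa [vec3] using h.2.1, by simp [vec3]⟩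
      have h123 : vec3.{u} (x + 0 + 0) (0 + y + 0) (0 + 0 + z) ∈ famP k j := by simpa using h
      rw [← yel_add t _ _ _ _ _ _ _ _ h12, ← yel_add t _ _ _ _ _ _ _ _ h123]
      exact yel_congr t _ _ (by simp) (by simp) (by simp)
    rw [dec t x y z h, dec r _ _ _ h', map_add, map_add, q1, q2, q3]
  -- the diagonal is scalar
  have u3 := hθ _ ((yel_mem t (j := ⟨3, by omega⟩) (a := 1) (b := 1) (c := 1)
    (pz _ (by simp) _ _ _)).2 ⟨1, 0, by simp, by simp, by simp [vec3], by simp [vec3],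
      by simp [vec3]⟩)
  rw [diag _ _ _ _ _ (pz _ (by simp) _ _ _), yel_mem] at u3
  obtain ⟨a1, b1, -, hb1, hx, hy, hz⟩ := u3
  have hb10 : b1 = 0 := hb1 (by simp)
  have hx' : a = a1 := by simpa [vec3, hb10] using hx
  have hy' : b' = a1 := by simpa [vec3, hb10] using hy
  have hz' : c'' = a1 := by simpa [vec3] using hz
  subst hx' hy' hz'
  refine ⟨c'', ?_, ?_⟩
  · intro hs
    have u2 := hθ _ ((yel_mem t (j := ⟨2, by omega⟩) (a := t) (b := 1) (c := 0)
      (pz _ (by simp) _ _ _)).2 ⟨0, 1, by simp, by simp, by simp [vec3], by simp [vec3],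
        by simp [vec3]⟩)
    rw [diag _ _ _ _ _ (pz _ (by simp) _ _ _), yel_mem] at u2
    obtain ⟨a2, b2, -, -, hx, hy, hz⟩ := u2
    have hz' : a2 = 0 := by simpa [vec3, eq_comm] using hz
    have hy' : c'' = b2 := by simpa [vec3, hz'] using hy
    have hx' : t * c'' = b2 * r := by simpa [vec3, hz'] using hx
    rw [← hy', mul_comm] at hx'
    exact mul_left_cancel₀ hs hx'
  · intro j x y z h h'
    rw [diag j x y z h (by simpa [mul_comm] using h')]
    simp only [mul_comm]

theorem fam_indec (hn : 6 ≤ n) (t : k) : PIndec (famPair.{u} k n t) := by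
  have m5 : vec3.{u} (1 : k) 0 0 ∈ famP k 5 := ⟨by simp, by simp [vec3], by simp [vec3]⟩
  have hne : yel t (⟨5, by omega⟩ : Fin n) 1 0 0 m5 ≠ 0 := by
    rw [ne_eq, yel_zero]
    intro h
    exact one_ne_zero h.1
  refine ⟨⟨_, _, hne⟩, ?_⟩
  intro e he hee
  obtain ⟨s, -, hs⟩ := fam_hom hn t t e he
  have hsm : ∀ (j : Fin n) (a b c : k), vec3.{u} a b c ∈ famP k j →
      vec3.{u} (s * a) (s * b) (s * c) ∈ famP k j :=
    fun j a b c h => Submodule.smul_mem (famP k j) s h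
  have h01 : s = 0 ∨ s = 1 := by
    have h1 := LinearMap.congr_fun hee (yel t (⟨5, by omega⟩ : Fin n) 1 0 0 m5)
    have h2 : e (e (yel t (⟨5, by omega⟩ : Fin n) 1 0 0 m5)) =
      e (yel t (⟨5, by omega⟩ : Fin n) 1 0 0 m5) := h1
    rw [hs _ _ _ _ _ (hsm _ _ _ _ m5), hs _ _ _ _ _ (hsm _ _ _ _ (hsm _ _ _ _ m5)),
      ← sub_eq_zero] at h2
    have mz : vec3.{u} (s * s - s) 0 0 ∈ famP k ((⟨5, by omega⟩ : Fin n) : ℕ) :=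
      ⟨by simp, by simp [vec3], by simp [vec3]⟩
    have ms : vec3.{u} (s * 1 + (s * s - s)) (s * 0 + 0) (s * 0 + 0) ∈
        famP k ((⟨5, by omega⟩ : Fin n) : ℕ) := ⟨by simp, by simp [vec3], by simp [vec3]⟩
    have h3 : yel t (⟨5, by omega⟩ : Fin n) (s * (s * 1)) (s * (s * 0)) (s * (s * 0))
        (hsm _ _ _ _ (hsm _ _ _ _ m5)) =
        yel t (⟨5, by omega⟩ : Fin n) (s * 1) (s * 0) (s * 0) (hsm _ _ _ _ m5) +
        yel t (⟨5, by omega⟩ : Fin n) (s * s - s) 0 0 mz :=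
      (yel_congr t _ ms (by ring) (by ring) (by ring)).trans (yel_add t _ _ _ _ _ _ _ _ _)
    rw [h3, add_sub_cancel_left] at h2
    replace h2 := (yel_zero t _).1 h2
    have h4 : s * s - s = 0 := h2.1
    have h5 : s * (s - 1) = 0 := by rw [← h4]; ring
    rcases mul_eq_zero.1 h5 with h | h
    · exact Or.inl h
    · exact Or.inr (sub_eq_zero.1 h)
  rcases h01 with rfl | rfl
  · left
    refine ext_xel (famRep_mono t) (famRep_mono t) fun j w hw => ?_
    refine (hs j w.down.1 w.down.2.1 w.down.2.2 hw (hsm _ _ _ _ hw)).trans ?_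
    refine (yel_zero t _).2 ?_
    simp only [zero_mul]
    exact zero_mem _
  · right
    refine ext_xel (famRep_mono t) (famRep_mono t) fun j w hw => ?_
    refine (hs j w.down.1 w.down.2.1 w.down.2.2 hw (hsm _ _ _ _ hw)).trans ?_
    simp only [one_mul]
    rfl

theorem fam_iso (hn : 6 ≤ n) (t r : k)
    (h : Nonempty (pairArrow (famPair.{u} k n t) ≅ pairArrow (famPair k n r))) : t = r := by
  obtain ⟨i⟩ := h
  let θ : (famPair.{u} k n t).V →ₗ[OpLT k n] (famPair k n r).V := i.hom.right.hom
  let φ : (famPair.{u} k n r).V →ₗ[OpLT k n] (famPair k n t).V := i.inv.right.hom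
  have hφ : ∀ x, φ (θ x) = x := fun x =>
    LinearMap.congr_fun (congrArg (fun t => ModuleCat.Hom.hom (CommaMorphism.right t))
      i.hom_inv_id) x
  obtain ⟨s, hs, hs'⟩ := fam_hom hn t r θ (pairArrow_mor i.hom)
  apply hs
  rintro rfl
  have m5 : vec3.{u} (1 : k) 0 0 ∈ famP k 5 := ⟨by simp, by simp [vec3], by simp [vec3]⟩
  have h0 : θ (yel t (⟨5, by omega⟩ : Fin n) 1 0 0 m5) = 0 := by
    rw [hs' _ _ _ _ _ (by simp only [zero_mul]; exact zero_mem _), yel_zero]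
    simp only [zero_mul]
    exact zero_mem _
  have h1 := hφ (yel t (⟨5, by omega⟩ : Fin n) 1 0 0 m5)
  rw [h0, map_zero, eq_comm, yel_zero] at h1
  exact one_ne_zero h1.1

theorem not_frt [Infinite k] (hn : 6 ≤ n) : ¬ FRTArrow (SObj.{u} (OpLT k n)) := by
  rintro ⟨s, hs, h⟩
  have h' : ∀ t : k, ∃ Y ∈ s, Nonempty (pairArrow (famPair.{u} k n t) ≅ Y) := fun t =>
    h _ (pairArrow_SObj _) (indec_of_pIndec _ (fam_indec hn t))
  choose Y hY hi using h'
  have : Finite s := hs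
  refine not_injective_infinite_finite (fun t : k => (⟨Y t, hY t⟩ : s)) ?_
  intro t r htr
  have hYtr : Y t = Y r := congrArg Subtype.val htr
  obtain ⟨i⟩ := hi t
  obtain ⟨j⟩ := hi r
  exact fam_iso hn t r ⟨i ≪≫ eqToIso hYtr ≪≫ j.symm⟩

end Family


end Helpers

/-- Let `k` be an algebraically closed field of characteristic
different from `2`, `n ≥ 1`, and `T_n(k)` the algebra of lower triangular `n × n`
matrices over `k`.  Then the monomorphism category `S(mod T_n(k))` is of finite
representation type if and only if `n ≤ 5`. -/
theorem stmt18 (k : Type) [Field k] [IsAlgClosed k] (h2 : (2 : k) ≠ 0)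
    (n : ℕ) (hn : 1 ≤ n) :
    FRTArrow (SModObj (lowerTriangularAlg k n)) ↔ n ≤ 5 := by
  constructor
  · intro h
    by_contra hc
    haveI : Infinite k := inferInstance
    exact not_frt (k := k) (n := n) (by omega) h
  · intro hc
    obtain ⟨S, hS, h⟩ := transfer k n hc
    exact frt_of_finite (R := OpLT k n) hS h
end
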